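/- Let J be a nilpotent Jordan superalgebra over ℂ of type (2,3). Then J is isomorphic, via a grading-preserving algebra isomorphism, to one of the following superalgebras, each given on a homogeneous basis {e₁, e₂; f₁, f₂, f₃} (e_i even, f_j odd): (1) all products zero; (2) f₁f₂=e₁; (3) f₁f₂=e₁, f₁f₃=e₂; (4) e₁f₂=f₁; (5) e₁f₂=f₁, f₁f₂=e₂; (6) e₁f₂=f₁, f₂f₃=e₂; (7) e₁f₂=f₁, f₁f₃=e₂; (8) e₁f₂=f₁, f₂f₃=e₁; (9) e₁f₂=f₁, f₁f₂=e₂, f₂f₃=e₁; (10) e₁f₂=f₁, f₁f₃=e₂, f₂f₃=e₁; (11) e₁f₂=f₁, e₂f₃=f₁; (12) e₁f₂=f₁, e₂f₃=f₁, f₂f₃=e₂; (13) e₁f₂=f₁, e₂f₂=f₃; (14) e₁f₂=f₁, e₂f₂=f₃, f₁f₂=e₂; (15) e₁f₂=f₁, e₂f₃=f₂; (16) e₁f₂=f₁, e₁f₃=f₂; (17) e₁f₂=f₁, e₁f₃=f₂, f₂f₃=e₂; (18) e₁f₂=f₁, e₁f₃=f₂, f₁f₃=e₂; (19) e₁f₂=e₂f₃=f₁,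 e₁f₃=f₂; (20) e₁f₂=e₂f₃=f₁, e₁f₃=f₂, f₂f₃=e₂; (21) e₁²=e₂; (22) e₁²=e₂, f₁f₂=e₁; (23) e₁²=e₂, f₁f₂=e₂; (24) e₁²=e₂, f₁f₂=e₁, f₁f₃=e₂; (25) e₁²=e₂, e₁f₂=f₁; (26) e₁²=e₂, e₁f₂=f₁, f₂f₃=e₂; (27) e₁²=e₂, e₁f₂=f₁, f₁f₂=e₂; (28) e₁²=e₂, e₁f₂=f₁, f₁f₃=e₂; (29) e₁²=e₂, e₁f₂=f₁, f₂f₃=e₁; (30) e₁²=e₂, e₁f₂=f₁, f₁f₂=e₂, f₂f₃=e₁; (31^λ) e₁²=e₂, e₁f₂=f₁, f₁f₃=λe₂, f₂f₃=e₁, for λ ∈ ℂ∖{0}; (32) e₁²=e₂, e₁f₂=f₁, e₁f₃=f₂; (33) e₁²=e₂, e₁f₂=f₁, e₁f₃=f₂, f₁f₃=e₂; (34) e₁²=e₂, e₁f₂=f₁, e₁f₃=f₂, f₂f₃=e₂; (35) e₁²=e₂, e₂f₂=f₁; (36) e₁²=e₂, e₂f₂=f₁, f₂f₃=e₂; (37)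 e₁²=e₂, e₂f₂=f₁, f₂f₃=e₁; (38) e₁²=e₂, e₁f₂=e₂f₂=f₁, f₂f₃=e₁; (39) e₁²=e₂, e₁f₃=e₂f₂=f₁; (40) e₁²=e₂, e₁f₃=e₂f₂=f₁, f₂f₃=e₂; (41) e₁²=e₂, e₁f₃=e₂f₂=f₁, f₂f₃=e₁; (42) e₁²=e₂, e₁f₂=f₃, e₂f₂=f₁; (43^γ) e₁²=e₂, e₁f₂=f₃, e₁f₃=γf₁, e₂f₂=f₁, for γ ∈ ℂ∖{0}; (44^φ) e₁²=e₂, e₁f₂=f₃, e₁f₃=φf₁, e₂f₂=f₁, f₂f₃=e₂, for φ ∈ ℂ. Moreover, these superalgebras are pairwise non-isomorphic, except that within the families: (31^{λ₁}) ≅ (31^{λ₂}) iff λ₁ = λ₂, (43^{γ₁}) ≅ (43^{γ₂}) iff γ₁ = γ₂, and (44^{φ₁}) ≅ (44^{φ₂}) iff φ₁ = φ₂. -/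

import Mathlib

noncomputable section

/-- The underlying ℤ/2-graded vector space of type `(m,n)`: even part `Fin m → ℂ`,
odd part `Fin n → ℂ`. -/
abbrev GV (m n : ℕ) : Type := (Fin m → ℂ) × (Fin n → ℂ)

/-- A superalgebra structure tensor of type `(m,n)`: structure constants
`c i j k` (even·even), `ρ i j k` (even·odd) and `Γ i j k` (odd·odd). -/
abbrev Tensor (m n : ℕ) : Type :=
  (Fin m → Fin m → Fin m → ℂ) × (Fin m → Fin n → Fin n → ℂ) × (Fin n → Fin n → Fin m → ℂ)

/-- The ℤ/2-graded multiplication on `GV m n` determined by a structure tensor. -/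
def mulOf {m n : ℕ} (μ : Tensor m n) (x y : GV m n) : GV m n :=
  (fun k => (∑ i, ∑ j, x.1 i * y.1 j * μ.1 i j k) + ∑ i, ∑ j, x.2 i * y.2 j * μ.2.2 i j k,
   fun k => (∑ i, ∑ j, x.1 i * y.2 j * μ.2.1 i j k) + ∑ i, ∑ j, y.1 i * x.2 j * μ.2.1 i j k)

/-- `x` is homogeneous of parity `p` (`p = 0`: even, `p = 1`: odd). -/
def IsHom {m n : ℕ} (p : ℕ) (x : GV m n) : Prop :=
  (p = 0 ∧ x.2 = 0) ∨ (p = 1 ∧ x.1 = 0)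

/-- The sign `(-1)^k`. -/
def sgn (k : ℕ) : ℂ := (-1 : ℂ) ^ k

/-- The super-Jordan expression `J^s(w; x, y, z)` for homogeneous elements of
parities `pw, px, py, pz`. -/
def superJ {m n : ℕ} (μ : Tensor m n) (pw px py pz : ℕ) (w x y z : GV m n) : GV m n :=
  mulOf μ (mulOf μ w x) (mulOf μ y z)
    + sgn (px * py) • mulOf μ (mulOf μ w y) (mulOf μ x z)
    + sgn ((px + py) * pz) • mulOf μ (mulOf μ w z) (mulOf μ x y)
    - sgn (pw * px) • mulOf μ x (mulOf μ w (mulOf μ y z))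
    - sgn (py * (pw + px)) • mulOf μ y (mulOf μ w (mulOf μ x z))
    - sgn (pz * (pw + px + py)) • mulOf μ z (mulOf μ w (mulOf μ x y))

/-- `μ` is a Jordan superalgebra structure: supercommutativity and the Jordan
superidentity hold for all homogeneous elements. -/
def IsJordanSuper {m n : ℕ} (μ : Tensor m n) : Prop :=
  (∀ (px py : ℕ) (x y : GV m n), IsHom px x → IsHom py y →
      mulOf μ x y = sgn (px * py) • mulOf μ y x) ∧
  (∀ (pw px py pz : ℕ) (w x y z : GV m n),
      IsHom pw w → IsHom px x → IsHom py y → IsHom pz z →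
      superJ μ pw px py pz w x y z = 0)

/-- The product of two graded subspaces: the span of all products. -/
def mulSub {m n : ℕ} (μ : Tensor m n) (A B : Submodule ℂ (GV m n)) : Submodule ℂ (GV m n) :=
  Submodule.span ℂ {z | ∃ a ∈ A, ∃ b ∈ B, z = mulOf μ a b}

/-- The powers `J^k`: `J^1 = J` and `J^{k+1} = Σ_{i=1}^{k} J^i · J^{k+1-i}`. -/
def powT {m n : ℕ} (μ : Tensor m n) : ℕ → Submodule ℂ (GV m n)
  | 0 => ⊤
  | 1 => ⊤
  | (k + 2) => ⨆ i : Fin (k + 1), mulSub μ (powT μ ((i : ℕ) + 1)) (powT μ (k + 1 - (i : ℕ)))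
  decreasing_by
  · have := i.isLt; omega
  · omega

/-- `μ` is nilpotent: some power vanishes. -/
def IsNilpotentT {m n : ℕ} (μ : Tensor m n) : Prop :=
  ∃ k : ℕ, 1 ≤ k ∧ powT μ k = ⊥

/-- A grading-preserving algebra isomorphism between the superalgebras determined
by `μ` and `μ'`. -/
def Iso {m n : ℕ} (μ μ' : Tensor m n) : Prop :=
  ∃ (T : (Fin m → ℂ) ≃ₗ[ℂ] (Fin m → ℂ)) (S : (Fin n → ℂ) ≃ₗ[ℂ] (Fin n → ℂ)),
    ∀ x y : GV m n,
      (T ((mulOf μ x y).1), S ((mulOf μ x y).2)) = mulOf μ' (T x.1, S x.2) (T y.1, S y.2)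

/-- `μ` degenerates to `μ'`: `μ'` lies in the closure of the orbit of `μ` under
base change (in the standard topology). -/
def degenerates {m n : ℕ} (μ μ' : Tensor m n) : Prop :=
  μ' ∈ closure {ν : Tensor m n | Iso μ ν}

/-- Standard even basis vector `e_i`. -/
def eps {m n : ℕ} (i : Fin m) : GV m n := (Pi.single i 1, 0)

/-- Standard odd basis vector `f_j`. -/
def ph {m n : ℕ} (j : Fin n) : GV m n := (0, Pi.single j 1)


/-- A tensor of type (2,3) with products `e₁² = a·e₂`, `e₁f_j = Σ_k R1 j k f_k`,
`e₂f_j = Σ_k R2 j k f_k` and `f_if_j = W i j · e₁ + Θ i j · e₂`. -/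
def T23 (a : ℂ) (R1 R2 W Θ : Fin 3 → Fin 3 → ℂ) : Tensor 2 3 :=
  (fun i j k => if i = 0 ∧ j = 0 ∧ k = 1 then a else 0,
   fun i => if i = 0 then R1 else R2,
   fun i j k => if k = 0 then W i j else Θ i j)

/-- `e·f₂ = f₁`. -/
def P21 : Fin 3 → Fin 3 → ℂ := ![![0,0,0], ![1,0,0], ![0,0,0]]
/-- `e·f₃ = f₂`. -/
def P32 : Fin 3 → Fin 3 → ℂ := ![![0,0,0], ![0,0,0], ![0,1,0]]
/-- `e·f₃ = f₁`. -/
def P31 : Fin 3 → Fin 3 → ℂ := ![![0,0,0], ![0,0,0], ![1,0,0]]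
/-- `e·f₂ = f₃`. -/
def P23 : Fin 3 → Fin 3 → ℂ := ![![0,0,0], ![0,0,1], ![0,0,0]]
/-- `f₁f₂ = e`. -/
def W12 : Fin 3 → Fin 3 → ℂ := ![![0,1,0], ![-1,0,0], ![0,0,0]]
/-- `f₁f₃ = e`. -/
def W13 : Fin 3 → Fin 3 → ℂ := ![![0,0,1], ![0,0,0], ![-1,0,0]]
/-- `f₂f₃ = e`. -/
def W23 : Fin 3 → Fin 3 → ℂ := ![![0,0,0], ![0,0,1], ![0,-1,0]]

/-- The family `(2,3)₃₁^λ`: `e₁² = e₂`, `e₁f₂ = f₁`, `f₁f₃ = λe₂`, `f₂f₃ = e₁`. -/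
def A31 (l : ℂ) : Tensor 2 3 := T23 1 P21 0 W23 (l • W13)

/-- The family `(2,3)₄₃^γ`: `e₁² = e₂`, `e₁f₂ = f₃`, `e₁f₃ = γf₁`, `e₂f₂ = f₁`. -/
def A43 (g : ℂ) : Tensor 2 3 := T23 1 (P23 + g • P31) P21 0 0

/-- The family `(2,3)₄₄^φ`: `e₁² = e₂`, `e₁f₂ = f₃`, `e₁f₃ = φf₁`, `e₂f₂ = f₁`,
`f₂f₃ = e₂`. -/
def A44 (p : ℂ) : Tensor 2 3 := T23 1 (P23 + p • P31) P21 0 W23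

/-- The single (non-parametrized) nilpotent Jordan superalgebras of type (2,3)
from Table 5: entries 0–29 are `(2,3)₁`–`(2,3)₃₀` and entries 30–40 are
`(2,3)₃₂`–`(2,3)₄₂`. -/
def A23 : Fin 41 → Tensor 2 3 :=
  ![ T23 0 0 0 0 0,                -- (2,3)₁
     T23 0 0 0 W12 0,              -- (2,3)₂
     T23 0 0 0 W12 W13,            -- (2,3)₃
     T23 0 P21 0 0 0,              -- (2,3)₄
     T23 0 P21 0 0 W12,            -- (2,3)₅
     T23 0 P21 0 0 W23,            -- (2,3)₆
     T23 0 P21 0 0 W13,            -- (2,3)₇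
     T23 0 P21 0 W23 0,            -- (2,3)₈
     T23 0 P21 0 W23 W12,          -- (2,3)₉
     T23 0 P21 0 W23 W13,          -- (2,3)₁₀
     T23 0 P21 P31 0 0,            -- (2,3)₁₁
     T23 0 P21 P31 0 W23,          -- (2,3)₁₂
     T23 0 P21 P23 0 0,            -- (2,3)₁₃
     T23 0 P21 P23 0 W12,          -- (2,3)₁₄
     T23 0 P21 P32 0 0,            -- (2,3)₁₅
     T23 0 (P21 + P32) 0 0 0,      -- (2,3)₁₆
     T23 0 (P21 + P32) 0 0 W23,    -- (2,3)₁₇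
     T23 0 (P21 + P32) 0 0 W13,    -- (2,3)₁₈
     T23 0 (P21 + P32) P31 0 0,    -- (2,3)₁₉
     T23 0 (P21 + P32) P31 0 W23,  -- (2,3)₂₀
     T23 1 0 0 0 0,                -- (2,3)₂₁
     T23 1 0 0 W12 0,              -- (2,3)₂₂
     T23 1 0 0 0 W12,              -- (2,3)₂₃
     T23 1 0 0 W12 W13,            -- (2,3)₂₄
     T23 1 P21 0 0 0,              -- (2,3)₂₅
     T23 1 P21 0 0 W23,            -- (2,3)₂₆
     T23 1 P21 0 0 W12,            -- (2,3)₂₇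
     T23 1 P21 0 0 W13,            -- (2,3)₂₈
     T23 1 P21 0 W23 0,            -- (2,3)₂₉
     T23 1 P21 0 W23 W12,          -- (2,3)₃₀
     T23 1 (P21 + P32) 0 0 0,      -- (2,3)₃₂
     T23 1 (P21 + P32) 0 0 W13,    -- (2,3)₃₃
     T23 1 (P21 + P32) 0 0 W23,    -- (2,3)₃₄
     T23 1 0 P21 0 0,              -- (2,3)₃₅
     T23 1 0 P21 0 W23,            -- (2,3)₃₆
     T23 1 0 P21 W23 0,            -- (2,3)₃₇
     T23 1 P21 P21 W23 0,          -- (2,3)₃₈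
     T23 1 P31 P21 0 0,            -- (2,3)₃₉
     T23 1 P31 P21 0 W23,          -- (2,3)₄₀
     T23 1 P31 P21 W23 0,          -- (2,3)₄₁
     T23 1 P23 P21 0 0 ]           -- (2,3)₄₂

/-!
A nilpotent action on a finite-dimensional space is strictly triangular in a suitable basis. Hence a
nilpotent Jordan superalgebra of type `(2,3)` can be written so that `e₁² = a e₂` with `a ∈ {0, 1}`
and `e₁`, `e₂` act by strictly lower triangular matrices. The Jordan identities leave few pairs of
such matrices up to change of basis; for each of them the identities and nilpotency kill most
coefficients of the odd-odd form, and rescaling the basis normalises the others.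

Each algebra of the table is monomial: a product of basis vectors is a multiple of a basis vector.
The image of a nonassociative word, such as `J₁J₀` or `(J₁J₁)J₁`, is therefore a coordinate subspace
whose dimension can be read off the multiplication table. The dimensions of nine such images
separate most algebras of the table, and a few identities in the products separate the others.
-/

section ActsNilpotently

variable {K U V U' V' : Type*} [Field K] [AddCommGroup U] [Module K U] [AddCommGroup V]
  [Module K V] [AddCommGroup U'] [Module K U'] [AddCommGroup V'] [Module K V']

/-- The bilinear map `f`, seen as an action of `U` on `V`, is nilpotent. Instead of the vanishing
of all long products `u₁(u₂(⋯ v))` we ask that no nonzero subspace `A` satisfies `A ≤ U·A`. -/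
def ActsNilpotently (f : U →ₗ[K] V →ₗ[K] V) : Prop :=
  ∀ A : Submodule K V, A ≤ Submodule.map₂ f ⊤ A → A = ⊥

theorem ActsNilpotently.of_injective {f : U →ₗ[K] V →ₗ[K] V} (hf : ActsNilpotently f)
    {g : U' →ₗ[K] V' →ₗ[K] V'} (i : V' →ₗ[K] V) (hi : Function.Injective i) (j : U' → U)
    (hij : ∀ u v, i (g u v) = f (j u) (i v)) : ActsNilpotently g := by
  intro A hA
  apply Submodule.map_injective_of_injective hi
  rw [Submodule.map_bot]
  refine hf _ ((Submodule.map_mono hA).trans ?_)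
  rw [Submodule.map_le_iff_le_comap, Submodule.map₂_le]
  intro u _ v hv
  rw [Submodule.mem_comap, hij]
  exact Submodule.apply_mem_map₂ f trivial (Submodule.mem_map_of_mem hv)

theorem ActsNilpotently.eq_zero_of_apply_apply_eq_smul {f : U →ₗ[K] V →ₗ[K] V}
    (hf : ActsNilpotently f) {a b : U} {v : V} {c : K} (h : f b (f a v) = c • v) (hc : c ≠ 0) :
    v = 0 := by
  suffices H : Submodule.span K {v, f a v} = ⊥ from
    (Submodule.span_eq_bot.1 H) v (Set.mem_insert _ _)
  refine hf _ (Submodule.span_le.2 (Set.pair_subset ?_ ?_))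
  · have hmem : f b (f a v) ∈ Submodule.map₂ f ⊤ (Submodule.span K {v, f a v}) :=
      Submodule.apply_mem_map₂ f trivial (Submodule.mem_span_of_mem (by simp))
    rwa [h, Submodule.smul_mem_iff _ hc] at hmem
  · exact Submodule.apply_mem_map₂ f trivial (Submodule.mem_span_of_mem (by simp))

theorem ActsNilpotently.exists_dual_ne_zero_apply_mem_ker [Nontrivial V]
    {f : U →ₗ[K] V →ₗ[K] V} (hf : ActsNilpotently f) :
    ∃ φ : Module.Dual K V, φ ≠ 0 ∧ ∀ u v, f u v ∈ LinearMap.ker φ := by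
  have image_lt : Submodule.map₂ f ⊤ ⊤ < ⊤ :=
    lt_top_iff_ne_top.2 fun h => top_ne_bot (hf ⊤ h.ge)
  obtain ⟨φ, hφ, hker⟩ := Submodule.exists_le_ker_of_lt_top _ image_lt
  exact ⟨φ, hφ, fun _ _ => hker (Submodule.apply_mem_map₂ f trivial trivial)⟩

theorem ActsNilpotently.exists_triangular_basis {f : U →ₗ[K] V →ₗ[K] V}
    (hf : ActsNilpotently f) [FiniteDimensional K V] {n : ℕ} (hn : Module.finrank K V = n) :
    ∃ b : Module.Basis (Fin n) K V, ∀ u j, f u (b j) ∈ Submodule.span K (b '' Set.Ioi j) := by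
  induction n generalizing V with
  | zero => exact ⟨Module.finBasisOfFinrankEq K V hn, fun _ j => j.elim0⟩
  | succ n ih =>
    have : Nontrivial V := Module.nontrivial_of_finrank_eq_succ hn
    obtain ⟨φ, hφ, image_mem⟩ := hf.exists_dual_ne_zero_apply_mem_ker
    let g : U →ₗ[K] LinearMap.ker φ →ₗ[K] LinearMap.ker φ :=
      LinearMap.mk₂ K (fun u v => ⟨f u v, image_mem u v⟩) (by simp) (by simp) (by simp) (by simp)
    have hg : ActsNilpotently g :=
      hf.of_injective (LinearMap.ker φ).subtype (Submodule.injective_subtype _) id fun _ _ => rfl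
    have hker_finrank : Module.finrank K (LinearMap.ker φ) = n := by
      have := Module.Dual.finrank_ker_add_one_of_ne_zero hφ
      omega
    obtain ⟨b, hb⟩ := ih hg hker_finrank
    obtain ⟨x, hx⟩ := DFunLike.ne_iff.1 hφ
    rw [LinearMap.zero_apply] at hx
    have x_indep (c : K) (v : V) (hv : v ∈ LinearMap.ker φ) (h : c • x + v = 0) : c = 0 := by
      have := congrArg φ h
      simpa [LinearMap.mem_ker.1 hv, hx] using this
    have x_span (v : V) : ∃ c : K, v + c • x ∈ LinearMap.ker φ :=
      ⟨-(φ v / φ x), by simp [hx]⟩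
    refine ⟨Module.Basis.mkFinCons x b x_indep x_span, fun u j => ?_⟩
    rw [Module.Basis.coe_mkFinCons]
    have tail_image (s : Set (Fin n)) : (Fin.cons x ((↑) ∘ b) : Fin (n + 1) → V) '' (Fin.succ '' s)
        = (LinearMap.ker φ).subtype '' (b '' s) := by
      simp only [Set.image_image, Fin.cons_succ]; rfl
    cases j using Fin.cases with
    | zero =>
      have : Set.Ioi (0 : Fin (n + 1)) = Fin.succ '' Set.univ := by
        ext k; simp [Fin.pos_iff_ne_zero]
      rw [this, tail_image, Submodule.span_image, Set.image_univ, b.span_eq,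
        Submodule.map_subtype_top]
      exact image_mem _ _
    | succ j =>
      rw [← Fin.image_succ_Ioi, tail_image, Submodule.span_image]
      exact Submodule.mem_map_of_mem (f := (LinearMap.ker φ).subtype) (hb u j)

end ActsNilpotently

namespace Tensor

variable {m n : ℕ}

/-- The multiplication `mulOf μ` as a bilinear map. -/
def mul (μ : Tensor m n) : GV m n →ₗ[ℂ] GV m n →ₗ[ℂ] GV m n :=
  LinearMap.mk₂ ℂ (mulOf μ)
    (fun x x' y => by
      ext k <;> simp only [mulOf, Prod.fst_add, Prod.snd_add, Pi.add_apply, add_mul, mul_add,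
        Finset.sum_add_distrib] <;> ring)
    (fun c x y => by
      ext k <;> simp only [mulOf, Prod.smul_fst, Prod.smul_snd, Pi.smul_apply, smul_eq_mul,
        mul_add, Finset.mul_sum, mul_assoc, mul_left_comm])
    (fun x y y' => by
      ext k <;> simp only [mulOf, Prod.fst_add, Prod.snd_add, Pi.add_apply, add_mul, mul_add,
        Finset.sum_add_distrib] <;> ring)
    (fun c x y => by
      ext k <;> simp only [mulOf, Prod.smul_fst, Prod.smul_snd, Pi.smul_apply, smul_eq_mul,
        mul_add, Finset.mul_sum, mul_assoc, mul_left_comm])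

/-- The product of two even elements. -/
def evenMul (μ : Tensor m n) : (Fin m → ℂ) →ₗ[ℂ] (Fin m → ℂ) →ₗ[ℂ] (Fin m → ℂ) :=
  (μ.mul.compl₁₂ (LinearMap.inl ℂ _ _) (LinearMap.inl ℂ _ _)).compr₂ (LinearMap.fst ℂ _ _)

/-- The action of the even part on the odd part. -/
def act (μ : Tensor m n) : (Fin m → ℂ) →ₗ[ℂ] (Fin n → ℂ) →ₗ[ℂ] (Fin n → ℂ) :=
  (μ.mul.compl₁₂ (LinearMap.inl ℂ _ _) (LinearMap.inr ℂ _ _)).compr₂ (LinearMap.snd ℂ _ _)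

/-- The product of two odd elements. -/
def oddMul (μ : Tensor m n) : (Fin n → ℂ) →ₗ[ℂ] (Fin n → ℂ) →ₗ[ℂ] (Fin m → ℂ) :=
  (μ.mul.compl₁₂ (LinearMap.inr ℂ _ _) (LinearMap.inr ℂ _ _)).compr₂ (LinearMap.fst ℂ _ _)

variable (μ : Tensor m n)

theorem evenMul_apply (x y : Fin m → ℂ) (k : Fin m) :
    μ.evenMul x y k = ∑ i, ∑ j, x i * y j * μ.1 i j k := by
  simp [evenMul, mul, mulOf]

theorem act_apply (x : Fin m → ℂ) (y : Fin n → ℂ) (k : Fin n) :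
    μ.act x y k = ∑ i, ∑ j, x i * y j * μ.2.1 i j k := by
  simp [act, mul, mulOf]

theorem oddMul_apply (x y : Fin n → ℂ) (k : Fin m) :
    μ.oddMul x y k = ∑ i, ∑ j, x i * y j * μ.2.2 i j k := by
  simp [oddMul, mul, mulOf]

theorem evenMul_single (i j : Fin m) :
    μ.evenMul (Pi.single i 1) (Pi.single j 1) = μ.1 i j := by
  ext k
  simp [evenMul_apply, Pi.single_apply]

theorem act_single (i : Fin m) (j : Fin n) :
    μ.act (Pi.single i 1) (Pi.single j 1) = μ.2.1 i j := by
  ext k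
  simp [act_apply, Pi.single_apply]

theorem oddMul_single (i j : Fin n) :
    μ.oddMul (Pi.single i 1) (Pi.single j 1) = μ.2.2 i j := by
  ext k
  simp [oddMul_apply, Pi.single_apply]

theorem mulOf_eq (x y : GV m n) :
    mulOf μ x y = (μ.evenMul x.1 y.1 + μ.oddMul x.2 y.2, μ.act x.1 y.2 + μ.act y.1 x.2) := by
  ext k <;> simp [mulOf, evenMul_apply, act_apply, oddMul_apply]

theorem mul_eq (x y : GV m n) :
    μ.mul x y = (μ.evenMul x.1 y.1 + μ.oddMul x.2 y.2, μ.act x.1 y.2 + μ.act y.1 x.2) :=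
  μ.mulOf_eq x y

variable {μ}

theorem actsNilpotently_evenMul (h : ActsNilpotently μ.mul) : ActsNilpotently μ.evenMul :=
  h.of_injective (LinearMap.inl ℂ _ _) LinearMap.inl_injective (fun u => (u, 0)) fun u v => by
    simp [mul_eq]

theorem actsNilpotently_act (h : ActsNilpotently μ.mul) : ActsNilpotently μ.act :=
  h.of_injective (LinearMap.inr ℂ _ _) LinearMap.inr_injective (fun u => (u, 0)) fun u v => by
    simp [mul_eq]

end Tensor

section Isomorphism

variable {m n : ℕ} {μ ν ξ : Tensor m n}

theorem iso_iff : Iso μ ν ↔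
    ∃ (T : (Fin m → ℂ) ≃ₗ[ℂ] (Fin m → ℂ)) (S : (Fin n → ℂ) ≃ₗ[ℂ] (Fin n → ℂ)),
      (∀ x y, T (μ.evenMul x y) = ν.evenMul (T x) (T y)) ∧
      (∀ x y, S (μ.act x y) = ν.act (T x) (S y)) ∧
      (∀ x y, T (μ.oddMul x y) = ν.oddMul (S x) (S y)) := by
  refine ⟨fun ⟨T, S, h⟩ => ⟨T, S, fun x y => ?_, fun x y => ?_, fun x y => ?_⟩,
    fun ⟨T, S, h₁, h₂, h₃⟩ => ⟨T, S, fun x y => ?_⟩⟩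
  · simpa [Tensor.mulOf_eq] using congrArg Prod.fst (h (x, 0) (y, 0))
  · simpa [Tensor.mulOf_eq] using congrArg Prod.snd (h (x, 0) (0, y))
  · simpa [Tensor.mulOf_eq] using congrArg Prod.fst (h (0, x) (0, y))
  · simp [Tensor.mulOf_eq, h₁, h₂, h₃]

theorem Iso.refl (μ : Tensor m n) : Iso μ μ :=
  ⟨LinearEquiv.refl _ _, LinearEquiv.refl _ _, fun _ _ => rfl⟩

theorem Iso.symm (h : Iso μ ν) : Iso ν μ := by
  rw [iso_iff] at *
  obtain ⟨T, S, h₁, h₂, h₃⟩ := h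
  exact ⟨T.symm, S.symm, fun x y => by simp [LinearEquiv.symm_apply_eq, h₁],
    fun x y => by simp [LinearEquiv.symm_apply_eq, h₂],
    fun x y => by simp [LinearEquiv.symm_apply_eq, h₃]⟩

theorem Iso.trans (h : Iso μ ν) (h' : Iso ν ξ) : Iso μ ξ := by
  rw [iso_iff] at *
  obtain ⟨T, S, h₁, h₂, h₃⟩ := h
  obtain ⟨T', S', h₁', h₂', h₃'⟩ := h'
  exact ⟨T.trans T', S.trans S', fun x y => by simp [h₁, h₁'],
    fun x y => by simp [h₂, h₂'], fun x y => by simp [h₃, h₃']⟩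

theorem Iso.exists_linearEquiv (h : Iso μ ν) : ∃ φ : GV m n ≃ₗ[ℂ] GV m n,
    (∀ x y, φ (mulOf μ x y) = mulOf ν (φ x) (φ y)) ∧ ∀ p x, IsHom p x → IsHom p (φ x) := by
  obtain ⟨T, S, h⟩ := h
  refine ⟨T.prodCongr S, h, ?_⟩
  rintro p x (⟨hp, hx⟩ | ⟨hp, hx⟩)
  · exact Or.inl ⟨hp, by simp [hx]⟩
  · exact Or.inr ⟨hp, by simp [hx]⟩

theorem IsJordanSuper.of_iso (h : Iso ν μ) (hJ : IsJordanSuper μ) : IsJordanSuper ν := by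
  obtain ⟨φ, hmul, hhom⟩ := h.exists_linearEquiv
  refine ⟨fun px py x y hx hy => φ.injective ?_,
    fun pw px py pz w x y z hw hx hy hz => φ.injective ?_⟩
  · simpa [hmul] using hJ.1 px py _ _ (hhom _ _ hx) (hhom _ _ hy)
  · simpa [superJ, hmul] using
      hJ.2 pw px py pz _ _ _ _ (hhom _ _ hw) (hhom _ _ hx) (hhom _ _ hy) (hhom _ _ hz)

theorem ActsNilpotently.of_iso (h : Iso ν μ) (hN : ActsNilpotently μ.mul) :
    ActsNilpotently ν.mul := by
  obtain ⟨φ, hmul, -⟩ := h.exists_linearEquiv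
  exact hN.of_injective φ.toLinearMap φ.injective φ hmul

/-- The structure constants of `μ` in the basis of `GV m n` made of `b` and `c`. -/
def Tensor.inBases (μ : Tensor m n) (b : Module.Basis (Fin m) ℂ (Fin m → ℂ))
    (c : Module.Basis (Fin n) ℂ (Fin n → ℂ)) : Tensor m n :=
  (fun i j => b.equivFun (μ.evenMul (b i) (b j)), fun i j => c.equivFun (μ.act (b i) (c j)),
    fun i j => b.equivFun (μ.oddMul (c i) (c j)))

theorem iso_inBases (μ : Tensor m n) (b : Module.Basis (Fin m) ℂ (Fin m → ℂ))
    (c : Module.Basis (Fin n) ℂ (Fin n → ℂ)) : Iso μ (μ.inBases b c) := by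
  let ν := μ.inBases b c
  let T := b.equivFun.toLinearMap
  let S := c.equivFun.toLinearMap
  have hT (i) : b.equivFun (b i) = Pi.single i 1 := by
    ext; simp [Pi.single_apply, eq_comm]
  have hS (i) : c.equivFun (c i) = Pi.single i 1 := by
    ext; simp [Pi.single_apply, eq_comm]
  have h₁ : μ.evenMul.compr₂ T = ν.evenMul.compl₁₂ T T :=
    LinearMap.ext_basis b b fun i j => by simp [T, hT, ν, Tensor.evenMul_single, Tensor.inBases]
  have h₂ : μ.act.compr₂ S = ν.act.compl₁₂ T S :=
    LinearMap.ext_basis b c fun i j => by simp [T, S, hT, hS, ν, Tensor.act_single, Tensor.inBases]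
  have h₃ : μ.oddMul.compr₂ T = ν.oddMul.compl₁₂ S S :=
    LinearMap.ext_basis c c fun i j => by simp [T, S, hS, ν, Tensor.oddMul_single, Tensor.inBases]
  exact iso_iff.2 ⟨b.equivFun, c.equivFun, fun x y => LinearMap.congr_fun₂ h₁ x y,
    fun x y => LinearMap.congr_fun₂ h₂ x y, fun x y => LinearMap.congr_fun₂ h₃ x y⟩

end Isomorphism

section JordanNilpotent

variable {m n : ℕ} {μ : Tensor m n}

theorem mulSub_eq_map₂ (μ : Tensor m n) (A B : Submodule ℂ (GV m n)) :
    mulSub μ A B = Submodule.map₂ μ.mul A B := by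
  rw [Submodule.map₂_eq_span_image2, mulSub]
  congr 1
  ext z
  simp [Set.mem_image2, Tensor.mul, eq_comm]

theorem IsNilpotentT.actsNilpotently (h : IsNilpotentT μ) : ActsNilpotently μ.mul := by
  intro A hA
  obtain ⟨k, hk, hk0⟩ := h
  have le_powT (k : ℕ) : A ≤ powT μ (k + 1) := by
    induction k with
    | zero => rw [zero_add, powT]; exact le_top
    | succ k ih =>
      rw [powT]
      refine le_trans ?_ (le_iSup _ (0 : Fin (k + 1)))
      rw [mulSub_eq_map₂]
      exact hA.trans (Submodule.map₂_le_map₂ (by simp [powT]) (by simpa using ih))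
  obtain ⟨j, rfl⟩ := Nat.exists_eq_add_of_le' hk
  exact le_bot_iff.1 (hk0 ▸ le_powT j)

/-- Jordan superalgebra structures whose multiplication is nilpotent in the sense of
`ActsNilpotently`; the class of tensors that gets classified. -/
structure IsNilpotentJordan (μ : Tensor m n) : Prop where
  jordan : IsJordanSuper μ
  nilpotent : ActsNilpotently μ.mul

theorem IsNilpotentJordan.of_iso {ν : Tensor m n} (h : Iso ν μ) (hμ : IsNilpotentJordan μ) :
    IsNilpotentJordan ν :=
  ⟨hμ.jordan.of_iso h, hμ.nilpotent.of_iso h⟩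

theorem isHom_even (x : Fin m → ℂ) : IsHom 0 ((x, 0) : GV m n) := Or.inl ⟨rfl, rfl⟩

theorem isHom_odd (x : Fin n → ℂ) : IsHom 1 ((0, x) : GV m n) := Or.inr ⟨rfl, rfl⟩

namespace IsJordanSuper

theorem evenMul_comm (hJ : IsJordanSuper μ) (x y : Fin m → ℂ) : μ.evenMul x y = μ.evenMul y x := by
  have := congrArg Prod.fst (hJ.1 0 0 (x, 0) (y, 0) (isHom_even x) (isHom_even y))
  simpa [Tensor.mulOf_eq, sgn] using this

theorem oddMul_eq_neg (hJ : IsJordanSuper μ) (f g : Fin n → ℂ) : μ.oddMul f g = -μ.oddMul g f := by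
  have := congrArg Prod.fst (hJ.1 1 1 (0, f) (0, g) (isHom_odd f) (isHom_odd g))
  simpa [Tensor.mulOf_eq, sgn] using this

theorem identity_eeeo (hJ : IsJordanSuper μ) (w x y : Fin m → ℂ) (f : Fin n → ℂ) :
    μ.act (μ.evenMul w x) (μ.act y f) + μ.act (μ.evenMul w y) (μ.act x f)
      + μ.act (μ.evenMul x y) (μ.act w f) - μ.act x (μ.act w (μ.act y f))
      - μ.act y (μ.act w (μ.act x f)) - μ.act (μ.evenMul w (μ.evenMul x y)) f = 0 := by
  have := congrArg Prod.snd
    (hJ.2 0 0 0 1 _ _ _ _ (isHom_even w) (isHom_even x) (isHom_even y) (isHom_odd f))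
  simpa [superJ, Tensor.mulOf_eq, sgn] using this

theorem identity_oeee (hJ : IsJordanSuper μ) (x y z : Fin m → ℂ) (f : Fin n → ℂ) :
    μ.act (μ.evenMul y z) (μ.act x f) + μ.act (μ.evenMul x z) (μ.act y f)
      + μ.act (μ.evenMul x y) (μ.act z f) - μ.act x (μ.act (μ.evenMul y z) f)
      - μ.act y (μ.act (μ.evenMul x z) f) - μ.act z (μ.act (μ.evenMul x y) f) = 0 := by
  have := congrArg Prod.snd
    (hJ.2 1 0 0 0 _ _ _ _ (isHom_odd f) (isHom_even x) (isHom_even y) (isHom_even z))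
  simpa [superJ, Tensor.mulOf_eq, sgn] using this

theorem identity_oeeo (hJ : IsJordanSuper μ) (x y : Fin m → ℂ) (f g : Fin n → ℂ) :
    μ.oddMul (μ.act x f) (μ.act y g) + μ.oddMul (μ.act y f) (μ.act x g)
      + μ.evenMul (μ.oddMul f g) (μ.evenMul x y) - μ.evenMul x (μ.oddMul f (μ.act y g))
      - μ.evenMul y (μ.oddMul f (μ.act x g)) + μ.oddMul g (μ.act (μ.evenMul x y) f) = 0 := by
  have := congrArg Prod.fst
    (hJ.2 1 0 0 1 _ _ _ _ (isHom_odd f) (isHom_even x) (isHom_even y) (isHom_odd g))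
  simpa [superJ, Tensor.mulOf_eq, sgn] using this

theorem identity_oeoo (hJ : IsJordanSuper μ) (x : Fin m → ℂ) (f g h : Fin n → ℂ) :
    μ.act (μ.oddMul g h) (μ.act x f) + μ.act (μ.oddMul f g) (μ.act x h)
      - μ.act (μ.oddMul f h) (μ.act x g) - μ.act x (μ.act (μ.oddMul g h) f)
      + μ.act (μ.oddMul f (μ.act x h)) g - μ.act (μ.oddMul f (μ.act x g)) h = 0 := by
  have := congrArg Prod.snd
    (hJ.2 1 0 1 1 _ _ _ _ (isHom_odd f) (isHom_even x) (isHom_odd g) (isHom_odd h))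
  simpa [superJ, Tensor.mulOf_eq, sgn, ← sub_eq_add_neg] using this

end IsJordanSuper

theorem IsNilpotentJordan.eq_zero_of_oddMul_act_eq_smul (hμ : IsNilpotentJordan μ)
    {u : Fin m → ℂ} (hu : u ≠ 0) {f g : Fin n → ℂ} {c : ℂ}
    (h : μ.oddMul (μ.act u f) g = c • u) : c = 0 := by
  by_contra hc
  have hmul : μ.mul (0, g) (μ.mul (0, f) (u, 0)) = (-c) • (u, 0) := by
    have := hμ.jordan.oddMul_eq_neg g (μ.act u f)
    simp [Tensor.mul_eq, this, h]
  have := hμ.nilpotent.eq_zero_of_apply_apply_eq_smul hmul (neg_ne_zero.2 hc)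
  exact hu (congrArg Prod.fst this)

end JordanNilpotent

section T23

open Matrix

/-- The basis of `ℂⁿ` formed by the rows of an invertible matrix. -/
def rowBasis {n : ℕ} (A : Matrix (Fin n) (Fin n) ℂ) (hA : A.det ≠ 0) :
    Module.Basis (Fin n) ℂ (Fin n → ℂ) :=
  basisOfLinearIndependentOfCardEqFinrank' A
    (linearIndependent_rows_iff_isUnit.2 (A.isUnit_iff_isUnit_det.2 hA.isUnit)) (by simp)

theorem rowBasis_apply {n : ℕ} (A : Matrix (Fin n) (Fin n) ℂ) (hA : A.det ≠ 0) (i : Fin n) :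
    rowBasis A hA i = A i :=
  congrFun (coe_basisOfLinearIndependentOfCardEqFinrank' _ _ _) i

/-- The matrix of the action `f₂ ↦ p f₁`, `f₃ ↦ r f₁ + q f₂`. -/
def lowMat (p q r : ℂ) : Fin 3 → Fin 3 → ℂ := ![![0, 0, 0], ![p, 0, 0], ![r, q, 0]]

/-- The skew-symmetric matrix with entries `x`, `y`, `z` in positions `12`, `13`, `23`. -/
def skewMat (x y z : ℂ) : Fin 3 → Fin 3 → ℂ := ![![0, x, y], ![-x, 0, z], ![-y, -z, 0]]

theorem exists_eq_skewMat {M : Fin 3 → Fin 3 → ℂ} (h : ∀ i j, M i j = -M j i) :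
    ∃ x y z, M = skewMat x y z := by
  refine ⟨M 0 1, M 0 2, M 1 2, ?_⟩
  ext i j
  fin_cases i <;> fin_cases j <;> simp [skewMat, h 1 0, h 2 0, h 2 1, self_eq_neg.1 (h _ _)]

variable {a a' : ℂ} {R₁ R₂ W Θ R₁' R₂' W' Θ' : Fin 3 → Fin 3 → ℂ}

theorem evenMul_T23 (x y : Fin 2 → ℂ) :
    (T23 a R₁ R₂ W Θ).evenMul x y = ![0, a * (x 0 * y 0)] := by
  ext k
  fin_cases k <;> simp [Tensor.evenMul_apply, T23, Fin.sum_univ_two, mul_comm]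

theorem act_T23 (x : Fin 2 → ℂ) (f : Fin 3 → ℂ) :
    (T23 a R₁ R₂ W Θ).act x f = f ᵥ* (x 0 • of R₁ + x 1 • of R₂) := by
  ext k
  simp [Tensor.act_apply, T23, Fin.sum_univ_two, vecMul, dotProduct, mul_add,
    Finset.sum_add_distrib, mul_assoc, mul_left_comm]

theorem vecMul_dotProduct_eq_sum (M : Fin 3 → Fin 3 → ℂ) (f g : Fin 3 → ℂ) :
    f ᵥ* of M ⬝ᵥ g = ∑ i, ∑ j, f i * M i j * g j := by
  simp only [vecMul, dotProduct, of_apply, Finset.sum_mul]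
  exact Finset.sum_comm

theorem oddMul_T23 (f g : Fin 3 → ℂ) :
    (T23 a R₁ R₂ W Θ).oddMul f g = ![f ᵥ* of W ⬝ᵥ g, f ᵥ* of Θ ⬝ᵥ g] := by
  ext k
  fin_cases k <;> simp [Tensor.oddMul_apply, T23, vecMul_dotProduct_eq_sum, mul_right_comm]

theorem IsJordanSuper.exists_eq_skewMat (hJ : IsJordanSuper (T23 a R₁ R₂ W Θ)) :
    (∃ x y z, W = skewMat x y z) ∧ ∃ x y z, Θ = skewMat x y z := by
  have skew (k : Fin 2) (i j : Fin 3) := by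
    have := congrFun (hJ.oddMul_eq_neg (Pi.single i 1) (Pi.single j 1)) k
    rwa [Pi.neg_apply, Tensor.oddMul_single, Tensor.oddMul_single] at this
  exact ⟨_root_.exists_eq_skewMat (skew 0), _root_.exists_eq_skewMat (skew 1)⟩

theorem iso_T23_of_bases {μ : Tensor 2 3} (b : Module.Basis (Fin 2) ℂ (Fin 2 → ℂ))
    (c : Module.Basis (Fin 3) ℂ (Fin 3 → ℂ))
    (heven : ∀ i j, μ.evenMul (b i) (b j) = if i = 0 ∧ j = 0 then a • b 1 else 0)
    (hR₁ : ∀ j, μ.act (b 0) (c j) = ∑ k, R₁ j k • c k)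
    (hR₂ : ∀ j, μ.act (b 1) (c j) = ∑ k, R₂ j k • c k) :
    Iso μ (T23 a R₁ R₂ (fun i j => b.equivFun (μ.oddMul (c i) (c j)) 0)
      fun i j => b.equivFun (μ.oddMul (c i) (c j)) 1) := by
  have coords (r : Fin 3 → ℂ) : c.equivFun (∑ k, r k • c k) = r := by
    rw [← c.equivFun_symm_apply, LinearEquiv.apply_symm_apply]
  convert iso_inBases μ b c using 1
  refine Prod.ext ?_ (Prod.ext ?_ ?_) <;> funext i j
  · ext k
    fin_cases i <;> fin_cases j <;> fin_cases k <;> simp [T23, Tensor.inBases, heven]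
  · fin_cases i <;>
      simp only [T23, Tensor.inBases, Fin.zero_eta, Fin.mk_one, hR₁, hR₂, coords] <;> rfl
  · ext k
    fin_cases k <;> rfl

section Matrix

variable {E : Matrix (Fin 2) (Fin 2) ℂ} {F : Matrix (Fin 3) (Fin 3) ℂ}

theorem T23_evenMul_rows (h₀₀ : a * E 0 0 ^ 2 = a' * E 1 1) (h₁₀ : a * E 1 0 = 0)
    (h₁₀' : a' * E 1 0 = 0) (i j : Fin 2) :
    (T23 a R₁ R₂ W Θ).evenMul (E i) (E j) = if i = 0 ∧ j = 0 then a' • E 1 else 0 := by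
  rw [evenMul_T23]
  ext k
  fin_cases i <;> fin_cases j <;> fin_cases k <;> simp <;> grind

theorem T23_act_rows {M : Matrix (Fin 3) (Fin 3) ℂ} {i : Fin 2}
    (h : F * (E i 0 • of R₁ + E i 1 • of R₂) = M * F) (j : Fin 3) :
    (T23 a R₁ R₂ W Θ).act (E i) (F j) = ∑ k, M j k • F k := by
  rw [act_T23, ← mul_apply_eq_vecMul, h]
  ext k
  simp [mul_apply]

theorem exists_iso_T23 (a' : ℂ) (R₁' R₂' : Fin 3 → Fin 3 → ℂ) (E : Matrix (Fin 2) (Fin 2) ℂ)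
    (F : Matrix (Fin 3) (Fin 3) ℂ) (hE : E.det ≠ 0) (hF : F.det ≠ 0)
    (h₀₀ : a * E 0 0 ^ 2 = a' * E 1 1) (h₁₀ : a * E 1 0 = 0) (h₁₀' : a' * E 1 0 = 0)
    (hR₁ : F * (E 0 0 • of R₁ + E 0 1 • of R₂) = of R₁' * F)
    (hR₂ : F * (E 1 0 • of R₁ + E 1 1 • of R₂) = of R₂' * F) :
    ∃ W' Θ', Iso (T23 a R₁ R₂ W Θ) (T23 a' R₁' R₂' W' Θ') := by
  refine ⟨_, _, iso_T23_of_bases (rowBasis E hE) (rowBasis F hF) ?_ ?_ ?_⟩ <;>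
    simp only [rowBasis_apply]
  exacts [T23_evenMul_rows h₀₀ h₁₀ h₁₀', T23_act_rows hR₁, T23_act_rows hR₂]

theorem iso_T23 (E : Matrix (Fin 2) (Fin 2) ℂ) (F : Matrix (Fin 3) (Fin 3) ℂ) (hE : E.det ≠ 0)
    (hF : F.det ≠ 0)
    (h₀₀ : a * E 0 0 ^ 2 = a' * E 1 1) (h₁₀ : a * E 1 0 = 0) (h₁₀' : a' * E 1 0 = 0)
    (hR₁ : F * (E 0 0 • of R₁ + E 0 1 • of R₂) = of R₁' * F)
    (hR₂ : F * (E 1 0 • of R₁ + E 1 1 • of R₂) = of R₂' * F)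
    (hW : ∀ i j, ∑ k, ∑ l, F i k * W k l * F j l = E 0 0 * W' i j + E 1 0 * Θ' i j)
    (hΘ : ∀ i j, ∑ k, ∑ l, F i k * Θ k l * F j l = E 0 1 * W' i j + E 1 1 * Θ' i j) :
    Iso (T23 a R₁ R₂ W Θ) (T23 a' R₁' R₂' W' Θ') := by
  let μ := T23 a R₁ R₂ W Θ
  have oddMul_rows (i j : Fin 3) : μ.oddMul (F i) (F j) = ∑ k, ![W' i j, Θ' i j] k • E k := by
    rw [oddMul_T23, vecMul_dotProduct_eq_sum, vecMul_dotProduct_eq_sum, hW, hΘ]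
    ext k
    fin_cases k <;> simp [mul_comm]
  have coords (i j : Fin 3) :
      (rowBasis E hE).equivFun (μ.oddMul (F i) (F j)) = ![W' i j, Θ' i j] := by
    simp only [oddMul_rows, ← rowBasis_apply E hE]
    rw [← Module.Basis.equivFun_symm_apply, LinearEquiv.apply_symm_apply]
  have := iso_T23_of_bases (μ := μ) (a := a') (R₁ := R₁') (R₂ := R₂') (rowBasis E hE)
    (rowBasis F hF) (by simpa only [rowBasis_apply] using T23_evenMul_rows h₀₀ h₁₀ h₁₀')
    (by simp only [rowBasis_apply]; exact T23_act_rows hR₁)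
    (by simp only [rowBasis_apply]; exact T23_act_rows hR₂)
  simp only [rowBasis_apply, coords] at this
  exact this

end Matrix

end T23

section Triangular

open Module

theorem eq_sum_Ioi_of_mem_span {K V : Type*} [Field K] [AddCommGroup V] [Module K V] {n : ℕ}
    (b : Basis (Fin n) K V) {v : V} {j : Fin n} (hv : v ∈ Submodule.span K (b '' Set.Ioi j)) :
    v = ∑ k ∈ Finset.Ioi j, b.repr v k • b k := by
  refine (b.sum_repr v).symm.trans (Finset.sum_subset (Finset.subset_univ _) fun k _ hk => ?_).symm
  have : b.repr v k = 0 := by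
    by_contra h
    exact hk (Finset.mem_Ioi.2 (b.mem_span_image.1 hv (Finsupp.mem_support_iff.2 h)))
  rw [this, zero_smul]

variable {μ : Tensor 2 3}

theorem exists_even_basis (hJ : IsJordanSuper μ) (hN : ActsNilpotently μ.evenMul) :
    ∃ (a : ℂ) (b : Basis (Fin 2) ℂ (Fin 2 → ℂ)), (a = 0 ∨ a = 1) ∧
      ∀ i j, μ.evenMul (b i) (b j) = if i = 0 ∧ j = 0 then a • b 1 else 0 := by
  obtain ⟨b, hb⟩ := hN.exists_triangular_basis (Module.finrank_fin_fun ℂ)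
  have mul_e₂ (u) : μ.evenMul u (b 1) = 0 := eq_sum_Ioi_of_mem_span b (hb u 1)
  have e₂_mul (u) : μ.evenMul (b 1) u = 0 := by rw [hJ.evenMul_comm, mul_e₂]
  obtain ⟨c, sq_e₁⟩ : ∃ c : ℂ, μ.evenMul (b 0) (b 0) = c • b 1 :=
    ⟨_, (eq_sum_Ioi_of_mem_span b (hb _ 0)).trans (Finset.sum_singleton _ _)⟩
  by_cases hc : c = 0
  · refine ⟨0, b, Or.inl rfl, fun i j => ?_⟩
    fin_cases i <;> fin_cases j <;> simp [mul_e₂, e₂_mul, sq_e₁, hc]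
  · refine ⟨1, b.unitsSMul ![1, Units.mk0 c hc], Or.inr rfl, fun i j => ?_⟩
    fin_cases i <;> fin_cases j <;>
      simp [Basis.unitsSMul_apply, mul_e₂, e₂_mul, sq_e₁, Units.smul_def]

theorem exists_odd_basis (hN : ActsNilpotently μ.act) :
    ∃ c : Basis (Fin 3) ℂ (Fin 3 → ℂ),
      ∀ u, ∃ p q r, ∀ j, μ.act u (c j) = ∑ k, lowMat p q r j k • c k := by
  obtain ⟨c, hc⟩ := hN.exists_triangular_basis (Module.finrank_fin_fun ℂ)
  refine ⟨c.reindex Fin.revPerm, fun u =>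
    ⟨c.repr (μ.act u (c 1)) 2, c.repr (μ.act u (c 0)) 1, c.repr (μ.act u (c 0)) 2, fun j => ?_⟩⟩
  have rev : Fin.rev (0 : Fin 3) = 2 ∧ Fin.rev (1 : Fin 3) = 1 ∧ Fin.rev (2 : Fin 3) = 0 := by
    decide
  have Ioi : Finset.Ioi (0 : Fin 3) = {1, 2} ∧ Finset.Ioi (1 : Fin 3) = {2} ∧
      Finset.Ioi (2 : Fin 3) = ∅ := by
    decide
  have expand (j) := eq_sum_Ioi_of_mem_span c (hc u j)
  fin_cases j
  · simpa [rev, Ioi, lowMat, Fin.sum_univ_three] using expand 2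
  · simpa [rev, Ioi, lowMat, Fin.sum_univ_three] using expand 1
  · simpa [rev, Ioi, lowMat, Fin.sum_univ_three, add_comm] using expand 0

theorem IsNilpotentJordan.exists_iso_T23_lowMat (hμ : IsNilpotentJordan μ) :
    ∃ a : ℂ, (a = 0 ∨ a = 1) ∧ ∃ p₁ q₁ r₁ p₂ q₂ r₂ W Θ,
      Iso μ (T23 a (lowMat p₁ q₁ r₁) (lowMat p₂ q₂ r₂) W Θ) := by
  obtain ⟨a, b, ha, hb⟩ :=
    exists_even_basis hμ.jordan (Tensor.actsNilpotently_evenMul hμ.nilpotent)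
  obtain ⟨c, hc⟩ := exists_odd_basis (Tensor.actsNilpotently_act hμ.nilpotent)
  obtain ⟨p₁, q₁, r₁, h₁⟩ := hc (b 0)
  obtain ⟨p₂, q₂, r₂, h₂⟩ := hc (b 1)
  exact ⟨a, ha, p₁, q₁, r₁, p₂, q₂, r₂, _, _, iso_T23_of_bases b c hb h₁ h₂⟩

end Triangular

section Table

open Matrix

/-- The conclusion of the classification: `μ` is isomorphic to a member of the table. -/
def InTable (μ : Tensor 2 3) : Prop :=
  (∃ i : Fin 41, Iso μ (A23 i)) ∨ (∃ l : ℂ, l ≠ 0 ∧ Iso μ (A31 l)) ∨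
    (∃ g : ℂ, g ≠ 0 ∧ Iso μ (A43 g)) ∨ (∃ p : ℂ, Iso μ (A44 p))

theorem InTable.of_iso {μ ν : Tensor 2 3} (hν : InTable ν) (h : Iso μ ν) : InTable μ :=
  hν.imp (fun ⟨i, hi⟩ => ⟨i, h.trans hi⟩) <| Or.imp (fun ⟨l, hl, hi⟩ => ⟨l, hl, h.trans hi⟩) <|
    Or.imp (fun ⟨g, hg, hi⟩ => ⟨g, hg, h.trans hi⟩) fun ⟨p, hi⟩ => ⟨p, h.trans hi⟩

theorem inTable_A23 (i : Fin 41) : InTable (A23 i) := .inl ⟨i, .refl _⟩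

theorem inTable_A31 {l : ℂ} (hl : l ≠ 0) : InTable (A31 l) := .inr (.inl ⟨l, hl, .refl _⟩)

theorem inTable_A43 {g : ℂ} (hg : g ≠ 0) : InTable (A43 g) :=
  .inr (.inr (.inl ⟨g, hg, .refl _⟩))

theorem inTable_A44 (p : ℂ) : InTable (A44 p) := .inr (.inr (.inr ⟨p, .refl _⟩))

variable {a : ℂ} {R₁ R₂ W Θ : Fin 3 → Fin 3 → ℂ}

theorem inTable_T23_of_zero_or_one (ha : a = 0 ∨ a = 1) (i j : Fin 41)
    (h₀ : A23 i = T23 0 R₁ R₂ W Θ) (h₁ : A23 j = T23 1 R₁ R₂ W Θ) :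
    InTable (T23 a R₁ R₂ W Θ) := by
  obtain rfl | rfl := ha
  exacts [h₀ ▸ inTable_A23 i, h₁ ▸ inTable_A23 j]

theorem skewMat_zero : skewMat 0 0 0 = 0 := by
  ext i j
  fin_cases i <;> fin_cases j <;> simp [skewMat]

attribute [local simp] P21 P32 W12 W13 W23 skewMat Fin.forall_fin_succ Fin.sum_univ_three
  Matrix.det_fin_three

theorem exists_congr_W12 {x y z : ℂ} (h : ¬(x = 0 ∧ y = 0 ∧ z = 0)) :
    ∃ F : Matrix (Fin 3) (Fin 3) ℂ, F.det ≠ 0 ∧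
      ∀ i j, ∑ k, ∑ l, F i k * skewMat x y z k l * F j l = W12 i j := by
  by_cases hx : x = 0
  · by_cases hy : y = 0
    · refine ⟨!![0, z⁻¹, 0; 0, 0, 1; z, -y, x], ?_⟩
      simp_all
    · refine ⟨!![y⁻¹, 0, 0; 0, 0, 1; z, -y, x], ?_⟩
      simp [hx, hy]
      grind
  · refine ⟨!![x⁻¹, 0, 0; 0, 1, 0; z, -y, x], ?_⟩
    simp [hx]
    grind

theorem inTable_zero_action_of_form₁_zero (ha : a = 0 ∨ a = 1) (x y z : ℂ) :
    InTable (T23 a 0 0 0 (skewMat x y z)) := by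
  by_cases h : x = 0 ∧ y = 0 ∧ z = 0
  · obtain ⟨rfl, rfl, rfl⟩ := h
    rw [skewMat_zero]
    exact inTable_T23_of_zero_or_one ha 0 20 rfl rfl
  · obtain ⟨F, hF, hΘ⟩ := exists_congr_W12 h
    obtain rfl | rfl := ha
    · exact (inTable_A23 1).of_iso <| iso_T23 !![0, 1; 1, 0] F (by simp) hF (by simp) (by simp)
        (by simp) (by simp) (by simp) (by simp) fun i j => by rw [hΘ]; simp
    · exact (inTable_A23 22).of_iso <| iso_T23 1 F (by simp) hF (by simp) (by simp) (by simp)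
        (by simp) (by simp) (by simp) fun i j => by rw [hΘ]; simp

theorem inTable_zero_action_W12 (ha : a = 0 ∨ a = 1) (x y z : ℂ) :
    InTable (T23 a 0 0 W12 (skewMat x y z)) := by
  by_cases hy : y = 0
  · by_cases hz : z = 0
    · refine (inTable_T23_of_zero_or_one ha 1 21 rfl rfl).of_iso ?_
      apply iso_T23 !![1, x; 0, 1] !![1, 0, 0; 0, 1, 0; 0, 0, 1] <;> simp [hy, hz]
    · refine (inTable_T23_of_zero_or_one ha 2 23 rfl rfl).of_iso ?_
      apply iso_T23 !![1, x; 0, 1] !![0, 1, 0; -1, 0, 0; 0, 0, z⁻¹] <;> simp [hy, hz]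
  · refine (inTable_T23_of_zero_or_one ha 2 23 rfl rfl).of_iso ?_
    apply iso_T23 !![1, x; 0, 1] !![1, 0, 0; -z / y, 1, 0; 0, 0, y⁻¹] <;> simp [hy]
    grind

theorem inTable_zero_action_skewMat (ha : a = 0 ∨ a = 1) (x y z x' y' z' : ℂ) :
    InTable (T23 a 0 0 (skewMat x y z) (skewMat x' y' z')) := by
  by_cases h : x = 0 ∧ y = 0 ∧ z = 0
  · obtain ⟨rfl, rfl, rfl⟩ := h
    rw [skewMat_zero]
    exact inTable_zero_action_of_form₁_zero ha _ _ _
  · obtain ⟨F, hF, hW⟩ := exists_congr_W12 h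
    let Θ' i j := ∑ k, ∑ l, F i k * skewMat x' y' z' k l * F j l
    obtain ⟨x₁, y₁, z₁, hΘ'⟩ : ∃ x y z, Θ' = skewMat x y z :=
      exists_eq_skewMat fun i j => by simp [Θ']; ring
    refine (inTable_zero_action_W12 ha x₁ y₁ z₁).of_iso ?_
    rw [← hΘ']
    exact iso_T23 1 F (by simp) hF (by simp) (by simp) (by simp) (by simp) (by simp)
      (fun i j => by rw [hW]; simp) fun i j => by simp [Θ']

theorem inTable_P21_of_form₁_zero (ha : a = 0 ∨ a = 1) (x y z : ℂ) :
    InTable (T23 a P21 0 0 (skewMat x y z)) := by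
  by_cases hy : y = 0
  · by_cases hx : x = 0
    · by_cases hz : z = 0
      · rw [hx, hy, hz, skewMat_zero]
        exact inTable_T23_of_zero_or_one ha 3 24 rfl rfl
      · refine (inTable_T23_of_zero_or_one ha 5 25 rfl rfl).of_iso ?_
        apply iso_T23 1 !![1, 0, 0; 0, 1, 0; 0, 0, z⁻¹] <;> simp [hy, hx, hz]
    · refine (inTable_T23_of_zero_or_one ha 4 26 rfl rfl).of_iso ?_
      apply iso_T23 !![x, 0; 0, x ^ 2] !![x, 0, 0; 0, 1, 0; z / x, 0, 1] <;>
        simp [hy, hx]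
      grind
  · refine (inTable_T23_of_zero_or_one ha 6 27 rfl rfl).of_iso ?_
    apply iso_T23 1 !![1, 0, 0; -z / y, 1, -x / y; 0, 0, y⁻¹] <;> simp [hy]
    grind


theorem inTable_P21_of_form₁_ne_zero (ha : a = 0 ∨ a = 1) {w : ℂ} (hw : w ≠ 0) (x y z : ℂ) :
    InTable (T23 a P21 0 (skewMat 0 0 w) (skewMat x y z)) := by
  by_cases hy : y = 0
  · by_cases hx : x = 0
    · refine (inTable_T23_of_zero_or_one ha 7 28 rfl rfl).of_iso ?_
      apply iso_T23 !![1, z / w; 0, 1] !![1, 0, 0; 0, 1, 0; 0, 0, w⁻¹] <;>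
        simp [hy, hx, hw]
      grind
    · refine (inTable_T23_of_zero_or_one ha 8 29 rfl rfl).of_iso ?_
      apply iso_T23 !![x, x * z / w; 0, x ^ 2] !![x, 0, 0; 0, 1, 0; 0, 0, x / w] <;>
        simp [hy, hx, hw] <;> grind
  · obtain rfl | rfl := ha
    · refine (inTable_A23 9).of_iso ?_
      apply iso_T23 !![1, z / w; 0, y / w] !![1, 0, 0; 0, 1, -x / y; 0, 0, w⁻¹] <;>
        simp [hy, hw] <;> grind
    · refine (inTable_A31 (div_ne_zero hy hw)).of_iso ?_
      apply iso_T23 !![1, z / w; 0, 1] !![1, 0, 0; 0, 1, -x / y; 0, 0, w⁻¹] <;>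
        simp [hy, hw] <;> grind

theorem inTable_P21_add_P32_skewMat (ha : a = 0 ∨ a = 1) (y z : ℂ) :
    InTable (T23 a (P21 + P32) 0 0 (skewMat 0 y z)) := by
  by_cases hy : y = 0
  · by_cases hz : z = 0
    · rw [hy, hz, skewMat_zero]
      exact inTable_T23_of_zero_or_one ha 15 30 rfl rfl
    · refine (inTable_T23_of_zero_or_one ha 16 32 rfl rfl).of_iso ?_
      apply iso_T23 !![z, 0; 0, z ^ 2] !![z ^ 2, 0, 0; 0, z, 0; 0, 0, 1] <;>
        simp [hy, hz] <;> ring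
  · obtain ⟨s, hs⟩ : ∃ s : ℂ, s ^ 2 = y⁻¹ := IsAlgClosed.exists_pow_nat_eq _ two_pos
    have hs₀ : s ≠ 0 := by
      rintro rfl
      exact inv_ne_zero hy (by simpa using hs.symm)
    refine (inTable_T23_of_zero_or_one ha 17 31 rfl rfl).of_iso ?_
    apply iso_T23 1 !![s, 0, 0; -s * z / y, s, 0; 0, -s * z / y, s] <;> simp [hs₀]
    grind

end Table

section OneDimensionalAction

open Matrix

attribute [local simp] P21 P32 skewMat lowMat Fin.sum_univ_three Matrix.det_fin_three evenMul_T23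
  act_T23 oddMul_T23

theorem IsNilpotentJordan.inTable_of_changeBasis {a a' : ℂ}
    {R₁ R₂ W Θ R₁' R₂' : Fin 3 → Fin 3 → ℂ} (hμ : IsNilpotentJordan (T23 a R₁ R₂ W Θ))
    (inTable : ∀ W' Θ', IsNilpotentJordan (T23 a' R₁' R₂' W' Θ') →
      InTable (T23 a' R₁' R₂' W' Θ'))
    (E : Matrix (Fin 2) (Fin 2) ℂ) (F : Matrix (Fin 3) (Fin 3) ℂ) (hE : E.det ≠ 0)
    (hF : F.det ≠ 0) (h₀₀ : a * E 0 0 ^ 2 = a' * E 1 1) (h₁₀ : a * E 1 0 = 0)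
    (h₁₀' : a' * E 1 0 = 0) (hR₁ : F * (E 0 0 • of R₁ + E 0 1 • of R₂) = of R₁' * F)
    (hR₂ : F * (E 1 0 • of R₁ + E 1 1 • of R₂) = of R₂' * F) : InTable (T23 a R₁ R₂ W Θ) := by
  obtain ⟨W', Θ', hiso⟩ := exists_iso_T23 a' R₁' R₂' E F hE hF h₀₀ h₁₀ h₁₀' hR₁ hR₂
  exact (inTable W' Θ' (.of_iso hiso.symm hμ)).of_iso hiso

variable {a p q r x y z x' y' z' : ℂ} {W Θ : Fin 3 → Fin 3 → ℂ}

theorem IsNilpotentJordan.form₁_eq_zero_of_P21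
    (h : IsNilpotentJordan (T23 a P21 0 (skewMat x y z) (skewMat x' y' z'))) :
    x = 0 ∧ y = 0 := by
  constructor <;> by_contra h0
  · refine h0 (h.eq_zero_of_oddMul_act_eq_smul (u := ![x, x']) (f := ![0, 1, 0])
      (g := ![0, 1, 0]) (fun h => h0 (congrFun h 0)) ?_)
    simp
  · refine h0 (h.eq_zero_of_oddMul_act_eq_smul (u := ![y, y']) (f := ![0, 1, 0])
      (g := ![0, 0, 1]) (fun h => h0 (congrFun h 0)) ?_)
    simp [mul_comm]

theorem IsJordanSuper.form_eq_zero_of_P21_add_P32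
    (hJ : IsJordanSuper (T23 a (P21 + P32) 0 (skewMat x y z) (skewMat x' y' z'))) :
    x = 0 ∧ y = 0 ∧ z = 0 ∧ x' = 0 := by
  have h₁ := hJ.identity_oeoo ![1, 0] ![1, 0, 0] ![0, 0, 1] ![0, 1, 0]
  have h₂ := hJ.identity_oeoo ![1, 0] ![0, 1, 0] ![0, 0, 1] ![0, 1, 0]
  have h₃ := hJ.identity_oeoo ![1, 0] ![0, 0, 1] ![0, 0, 1] ![0, 1, 0]
  have h₄ := hJ.identity_oeeo ![1, 0] ![1, 0] ![0, 1, 0] ![0, 0, 1]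
  simp at h₁ h₂ h₃ h₄
  grind

theorem IsNilpotentJordan.inTable_P21 (ha : a = 0 ∨ a = 1)
    (hμ : IsNilpotentJordan (T23 a P21 0 W Θ)) : InTable (T23 a P21 0 W Θ) := by
  obtain ⟨⟨x, y, z, rfl⟩, x', y', z', rfl⟩ := hμ.jordan.exists_eq_skewMat
  obtain ⟨rfl, rfl⟩ := hμ.form₁_eq_zero_of_P21
  by_cases hz : z = 0
  · rw [hz, skewMat_zero]
    exact inTable_P21_of_form₁_zero ha x' y' z'
  · exact inTable_P21_of_form₁_ne_zero ha hz x' y' z'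

theorem IsNilpotentJordan.inTable_P21_add_P32 (ha : a = 0 ∨ a = 1)
    (hμ : IsNilpotentJordan (T23 a (P21 + P32) 0 W Θ)) : InTable (T23 a (P21 + P32) 0 W Θ) := by
  obtain ⟨⟨x, y, z, rfl⟩, x', y', z', rfl⟩ := hμ.jordan.exists_eq_skewMat
  obtain ⟨rfl, rfl, rfl, rfl⟩ := hμ.jordan.form_eq_zero_of_P21_add_P32
  rw [skewMat_zero]
  exact inTable_P21_add_P32_skewMat ha y' z'

theorem IsNilpotentJordan.inTable_zero_action (ha : a = 0 ∨ a = 1)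
    (hμ : IsNilpotentJordan (T23 a 0 0 W Θ)) : InTable (T23 a 0 0 W Θ) := by
  obtain ⟨⟨x, y, z, rfl⟩, x', y', z', rfl⟩ := hμ.jordan.exists_eq_skewMat
  exact inTable_zero_action_skewMat ha x y z x' y' z'

theorem lowMat_zero : lowMat 0 0 0 = 0 := by
  ext i j
  fin_cases i <;> fin_cases j <;> simp [lowMat]

theorem IsNilpotentJordan.inTable_lowMat_zero (ha : a = 0 ∨ a = 1)
    (hμ : IsNilpotentJordan (T23 a (lowMat p q r) 0 W Θ)) :
    InTable (T23 a (lowMat p q r) 0 W Θ) := by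
  by_cases hp : p = 0
  · by_cases hq : q = 0
    · by_cases hr : r = 0
      · rw [hp, hq, hr, lowMat_zero] at hμ ⊢
        exact hμ.inTable_zero_action ha
      · apply hμ.inTable_of_changeBasis (fun _ _ => inTable_P21 ha) 1
          !![r, 0, 0; 0, 0, 1; 0, 1, 0] <;> simp [hp, hq, hr]
    · apply hμ.inTable_of_changeBasis (fun _ _ => inTable_P21 ha) 1
        !![r, q, 0; 0, 0, 1; 1, 0, 0] <;> simp [hp, hq]
  · by_cases hq : q = 0
    · apply hμ.inTable_of_changeBasis (fun _ _ => inTable_P21 ha) 1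
        !![p, 0, 0; 0, 1, 0; 0, -r / p, 1] <;> simp [hp, hq]
    · apply hμ.inTable_of_changeBasis (fun _ _ => inTable_P21_add_P32 ha) 1
        !![p * q, 0, 0; r, q, 0; 0, 0, 1] <;> simp [hp, hq, mul_comm]

end OneDimensionalAction

section TwoDimensionalAction

open Matrix

theorem trace_eq_zero_and_det_eq_zero {K n : Type*} [Field K] [IsAlgClosed K] [Fintype n]
    [DecidableEq n] [Nonempty n] {A : Matrix n n K}
    (h : ∀ (c : K) (v : n → K), v ≠ 0 → A *ᵥ v = c • v → c = 0) : A.trace = 0 ∧ A.det = 0 := by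
  have root_eq_zero : ∀ c ∈ A.charpoly.roots, c = 0 := by
    intro c hc
    rw [Polynomial.mem_roots A.charpoly_monic.ne_zero, Polynomial.IsRoot.def,
      eval_charpoly] at hc
    obtain ⟨v, hv, hAv⟩ := exists_mulVec_eq_zero_iff.2 hc
    refine h c v hv (sub_eq_zero.1 ?_).symm
    simpa [sub_mulVec] using hAv
  have card_roots : A.charpoly.roots.card = Fintype.card n := by
    rw [IsAlgClosed.card_roots_eq_natDegree, charpoly_natDegree_eq_dim]
  rw [trace_eq_sum_roots_charpoly, det_eq_prod_roots_charpoly, Multiset.eq_replicate.2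
    ⟨card_roots, root_eq_zero⟩]
  simp

attribute [local simp] P21 P31 P32 P23 W12 W23 skewMat Fin.forall_fin_succ Fin.sum_univ_three
  Matrix.det_fin_three evenMul_T23 act_T23 oddMul_T23 dotProduct

variable {p q r p' q' r' x y z x' y' z' : ℂ} {W Θ : Fin 3 → Fin 3 → ℂ}

theorem IsJordanSuper.form_eq_zero_of_P21_P31
    (hJ : IsJordanSuper (T23 0 P21 P31 (skewMat x y z) (skewMat x' y' z'))) :
    x = 0 ∧ y = 0 ∧ x' = 0 ∧ y' = 0 := by
  have h₁ := hJ.identity_oeoo ![1, 0] ![1, 0, 0] ![0, 0, 1] ![0, 1, 0]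
  have h₂ := hJ.identity_oeoo ![1, 0] ![0, 1, 0] ![0, 0, 1] ![0, 1, 0]
  have h₃ := hJ.identity_oeoo ![1, 0] ![0, 0, 1] ![0, 0, 1] ![0, 1, 0]
  have h₄ := hJ.identity_oeoo ![0, 1] ![1, 0, 0] ![0, 1, 0] ![0, 0, 1]
  have h₅ := hJ.identity_oeoo ![0, 1] ![0, 1, 0] ![0, 1, 0] ![0, 0, 1]
  have h₆ := hJ.identity_oeoo ![0, 1] ![0, 0, 1] ![0, 1, 0] ![0, 0, 1]
  simp at h₁ h₂ h₃ h₄ h₅ h₆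
  grind

theorem IsJordanSuper.inTable_P21_P31 (hJ : IsJordanSuper (T23 0 P21 P31 W Θ)) :
    InTable (T23 0 P21 P31 W Θ) := by
  obtain ⟨⟨x, y, z, rfl⟩, x', y', z', rfl⟩ := hJ.exists_eq_skewMat
  obtain ⟨rfl, rfl, rfl, rfl⟩ := hJ.form_eq_zero_of_P21_P31
  by_cases hz' : z' = 0
  · by_cases hz : z = 0
    · rw [hz, hz', skewMat_zero]
      exact inTable_A23 10
    · refine (inTable_A23 11).of_iso ?_
      apply iso_T23 !![0, -z; -z, 0] !![-z, 0, 0; 0, 0, 1; 0, 1, 0] <;> simp [hz', hz]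
  · refine (inTable_A23 11).of_iso ?_
    apply iso_T23 !![z', 0; z' * z, z' * z'] !![z' ^ 2, 0, 0; 0, z', -z; 0, 0, 1] <;>
      simp [hz'] <;> grind

theorem IsNilpotentJordan.form₁₃_eq_zero_of_P21_P23
    (hμ : IsNilpotentJordan (T23 0 P21 P23 (skewMat x y z) (skewMat x' y' z'))) :
    y = 0 ∧ y' = 0 := by
  have vanish (s t : ℂ) : y * t - y' * s = 0 := by
    by_contra h
    have hu : ![y, y'] ≠ 0 := by
      intro hu
      simp_all [funext_iff]
    refine h (hμ.eq_zero_of_oddMul_act_eq_smul hu (f := ![0, 1, 0]) (g := ![s, 0, t]) ?_)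
    simp
    constructor <;> ring
  exact ⟨by simpa using vanish 0 1, by simpa using vanish 1 0⟩

/-- By nilpotency, the operator `u ↦ (u f₂) f₂` on the even part has no nonzero eigenvalue. -/
theorem IsNilpotentJordan.form_relations_of_P21_P23
    (hμ : IsNilpotentJordan (T23 0 P21 P23 (skewMat x 0 z) (skewMat x' 0 z'))) :
    z' = x ∧ x ^ 2 = z * x' := by
  have htd := trace_eq_zero_and_det_eq_zero (A := !![x, -z; x', -z']) fun c v hv h => by
    refine hμ.eq_zero_of_oddMul_act_eq_smul hv (f := ![0, 1, 0]) (g := ![0, 1, 0]) ?_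
    rw [← h]
    ext i
    fin_cases i <;> simp [mulVec, Fin.sum_univ_two] <;> ring
  simp [trace, Fin.sum_univ_two] at htd
  grind

theorem IsNilpotentJordan.inTable_P21_P23 (hμ : IsNilpotentJordan (T23 0 P21 P23 W Θ)) :
    InTable (T23 0 P21 P23 W Θ) := by
  obtain ⟨⟨x, y, z, rfl⟩, x', y', z', rfl⟩ := hμ.jordan.exists_eq_skewMat
  obtain ⟨rfl, rfl⟩ := hμ.form₁₃_eq_zero_of_P21_P23
  obtain ⟨rfl, hx⟩ := hμ.form_relations_of_P21_P23
  by_cases hx' : x' = 0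
  · obtain rfl : z' = 0 := by simpa [hx'] using hx
    by_cases hz : z = 0
    · rw [hz, hx', skewMat_zero]
      exact inTable_A23 12
    · refine (inTable_A23 13).of_iso ?_
      apply iso_T23 !![0, 1; -z, 0] !![0, 0, 1; 0, 1, 0; -z, 0, 0] <;> simp [hz, hx']
  · refine (inTable_A23 13).of_iso ?_
    apply iso_T23 !![1, 0; z', x'] !![1, 0, 0; 0, 1, 0; z', 0, x'] <;> simp [hx'] <;> grind

theorem IsNilpotentJordan.form_eq_zero_of_P21_P32
    (hμ : IsNilpotentJordan (T23 0 P21 P32 (skewMat x y z) (skewMat x' y' z'))) :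
    x = 0 ∧ y = 0 ∧ z = 0 ∧ x' = 0 ∧ y' = 0 ∧ z' = 0 := by
  have h₁ := hμ.jordan.identity_oeeo ![1, 0] ![0, 1] ![0, 1, 0] ![0, 0, 1]
  have h₂ := hμ.jordan.identity_oeoo ![1, 0] ![0, 0, 1] ![0, 1, 0] ![0, 0, 1]
  have h₃ := hμ.jordan.identity_oeoo ![0, 1] ![0, 0, 1] ![0, 1, 0] ![0, 0, 1]
  simp at h₁ h₂ h₃
  have hy' : y' = 0 := by grind
  have hy : y = 0 := by
    refine hμ.eq_zero_of_oddMul_act_eq_smul (u := ![1, 0]) (f := ![0, 1, 0]) (g := ![0, 0, 1])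
      (fun h => by simpa using congrFun h 0) ?_
    simp [hy']
  grind

theorem IsNilpotentJordan.inTable_P21_P32 (hμ : IsNilpotentJordan (T23 0 P21 P32 W Θ)) :
    InTable (T23 0 P21 P32 W Θ) := by
  obtain ⟨⟨x, y, z, rfl⟩, x', y', z', rfl⟩ := hμ.jordan.exists_eq_skewMat
  obtain ⟨rfl, rfl, rfl, rfl, rfl, rfl⟩ := hμ.form_eq_zero_of_P21_P32
  rw [skewMat_zero]
  exact inTable_A23 14

theorem IsNilpotentJordan.form_eq_zero_of_P21_add_P32_P31
    (hμ : IsNilpotentJordan (T23 0 (P21 + P32) P31 (skewMat x y z) (skewMat x' y' z'))) :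
    x = 0 ∧ y = 0 ∧ z = 0 ∧ x' = 0 ∧ y' = 0 := by
  have h₁ := hμ.jordan.identity_oeoo ![1, 0] ![1, 0, 0] ![0, 0, 1] ![0, 1, 0]
  have h₂ := hμ.jordan.identity_oeoo ![1, 0] ![0, 1, 0] ![0, 0, 1] ![0, 1, 0]
  have h₃ := hμ.jordan.identity_oeoo ![1, 0] ![0, 0, 1] ![0, 0, 1] ![0, 1, 0]
  have h₄ := hμ.jordan.identity_oeeo ![1, 0] ![1, 0] ![0, 1, 0] ![0, 0, 1]
  simp at h₁ h₂ h₃ h₄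
  have hy' : y' = 0 := by
    by_cases hy : y = 0
    · refine hμ.eq_zero_of_oddMul_act_eq_smul (u := ![0, 1]) (f := ![0, 0, 1])
        (g := ![0, 0, 1]) (fun h => by simpa using congrFun h 1) ?_
      simp [hy]
    · grind
  grind

theorem IsNilpotentJordan.inTable_P21_add_P32_P31
    (hμ : IsNilpotentJordan (T23 0 (P21 + P32) P31 W Θ)) :
    InTable (T23 0 (P21 + P32) P31 W Θ) := by
  obtain ⟨⟨x, y, z, rfl⟩, x', y', z', rfl⟩ := hμ.jordan.exists_eq_skewMat
  obtain ⟨rfl, rfl, rfl, rfl, rfl⟩ := hμ.form_eq_zero_of_P21_add_P32_P31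
  by_cases hz' : z' = 0
  · rw [hz', skewMat_zero]
    exact inTable_A23 18
  · refine (inTable_A23 19).of_iso ?_
    apply iso_T23 !![z', 0; 0, z' ^ 2] !![z' ^ 2, 0, 0; 0, z', 0; 0, 0, 1] <;>
      simp [hz'] <;> grind

end TwoDimensionalAction

section NilpotentEvenPart

open Matrix

attribute [local simp] P21 P31 P32 P23 lowMat Fin.forall_fin_succ Matrix.det_fin_three

variable {p q r p' q' r' : ℂ} {W Θ : Fin 3 → Fin 3 → ℂ}

theorem IsNilpotentJordan.inTable_lowMat_one_zero_lowMat_zero_one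
    (hμ : IsNilpotentJordan (T23 0 (lowMat 1 0 r) (lowMat 0 1 r') W Θ)) :
    InTable (T23 0 (lowMat 1 0 r) (lowMat 0 1 r') W Θ) := by
  apply hμ.inTable_of_changeBasis (fun _ _ => inTable_P21_P32) 1
    !![1, 0, 0; r', 1, 0; 0, -r, 1] <;> simp

theorem IsNilpotentJordan.inTable_lowMat_lowMat_zero_zero
    (hμ : IsNilpotentJordan (T23 0 (lowMat p q r) (lowMat 0 0 r') W Θ)) :
    InTable (T23 0 (lowMat p q r) (lowMat 0 0 r') W Θ) := by
  by_cases hr' : r' = 0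
  · rw [hr', lowMat_zero] at hμ ⊢
    exact hμ.inTable_lowMat_zero (.inl rfl)
  by_cases hp : p = 0
  · by_cases hq : q = 0
    · apply hμ.inTable_of_changeBasis (fun _ _ h => h.inTable_lowMat_zero (p := 0) (q := 0)
        (r := r') (.inl rfl)) !![0, 1; 1, -r / r'] 1 <;> simp [hp, hq, hr', ← Matrix.ext_iff]
    · apply hμ.inTable_of_changeBasis (fun _ _ => inTable_P21_P23)
        !![1, -r / r'; 0, 1] !![0, q, 0; 0, 0, 1; r', 0, 0] <;> simp [hp, hq, hr']
  · by_cases hq : q = 0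
    · apply hμ.inTable_of_changeBasis (fun _ _ h => h.jordan.inTable_P21_P31)
        !![p⁻¹, -r / r' / p; 0, r'⁻¹] 1 <;> simp [hp, hq, hr']
      grind
    · apply hμ.inTable_of_changeBasis (fun _ _ => inTable_P21_add_P32_P31)
        !![1, -r / r'; 0, p * q / r'] !![p * q, 0, 0; 0, q, 0; 0, 0, 1] <;>
          simp [hp, hq, hr']
      grind

theorem IsNilpotentJordan.inTable_lowMat_lowMat
    (hμ : IsNilpotentJordan (T23 0 (lowMat p q r) (lowMat p' q' r') W Θ)) :
    InTable (T23 0 (lowMat p q r) (lowMat p' q' r') W Θ) := by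
  by_cases hdet : p * q' - q * p' = 0
  · obtain ⟨s, t, hst, hp, hq⟩ :
        ∃ s t : ℂ, (s ≠ 0 ∨ t ≠ 0) ∧ s * p + t * p' = 0 ∧ s * q + t * q' = 0 := by
      by_cases h : p = 0 ∧ q = 0
      · exact ⟨1, 0, by simp, by simp [h.1], by simp [h.2]⟩
      · by_cases hp : p = 0
        · exact ⟨-q', q, .inr fun hq => h ⟨hp, hq⟩, by grind, by ring⟩
        · exact ⟨-p', p, .inr hp, by ring, by grind⟩
    by_cases ht : t = 0
    · apply hμ.inTable_of_changeBasis (fun _ _ h => h.inTable_lowMat_lowMat_zero_zero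
        (p := p') (q := q') (r := r') (r' := s * r)) !![0, 1; s, 0] 1 <;> simp_all
    · apply hμ.inTable_of_changeBasis (fun _ _ h => h.inTable_lowMat_lowMat_zero_zero
        (p := p) (q := q) (r := r) (r' := s * r + t * r')) !![1, 0; s, t] 1 <;> simp_all
  · apply hμ.inTable_of_changeBasis (fun _ _ h => h.inTable_lowMat_one_zero_lowMat_zero_one
      (r := (q' * r - q * r') / (p * q' - q * p')) (r' := (p * r' - p' * r) / (p * q' - q * p')))
      !![q' / (p * q' - q * p'), -q / (p * q' - q * p'); -p' / (p * q' - q * p'),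
        p / (p * q' - q * p')] 1 <;> simp <;> grind

end NilpotentEvenPart

section NonzeroEvenSquare

open Matrix

attribute [local simp] P21 P31 P23 W23 skewMat lowMat Fin.forall_fin_succ Fin.sum_univ_three
  Matrix.det_fin_three evenMul_T23 act_T23 oddMul_T23

variable {p q r p' q' r' x y z x' y' z' s t : ℂ} {W Θ : Fin 3 → Fin 3 → ℂ}

theorem IsNilpotentJordan.form_relations_of_P23_P31_P21
    (hμ : IsNilpotentJordan
      (T23 1 (s • P23 + t • P31) P21 (skewMat x y z) (skewMat x' y' z'))) :
    x = 0 ∧ y = 0 ∧ x' = 0 ∧ y' = 0 ∧ s * z = 0 := by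
  have h₁ := hμ.jordan.identity_oeeo ![1, 0] ![1, 0] ![0, 1, 0] ![0, 1, 0]
  have h₂ := hμ.jordan.identity_oeeo ![1, 0] ![1, 0] ![0, 1, 0] ![0, 0, 1]
  have h₃ := hμ.jordan.identity_oeeo ![1, 0] ![1, 0] ![0, 0, 1] ![0, 1, 0]
  simp at h₁ h₂ h₃
  have hx : x = 0 := by grind
  have hx' : x' = 0 := by
    refine hμ.eq_zero_of_oddMul_act_eq_smul (u := ![0, 1]) (f := ![0, 1, 0]) (g := ![0, 1, 0])
      (fun h => by simpa using congrFun h 1) ?_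
    simp [hx]
  grind

theorem inTable_P21_skewMat (z z' : ℂ) :
    InTable (T23 1 0 P21 (skewMat 0 0 z) (skewMat 0 0 z')) := by
  by_cases hz : z = 0
  · by_cases hz' : z' = 0
    · rw [hz, hz', skewMat_zero]
      exact inTable_A23 33
    · refine (inTable_A23 34).of_iso ?_
      apply iso_T23 !![1, 0; 0, 1] !![1, 0, 0; 0, 1, 0; 0, 0, z'⁻¹] <;> simp [hz, hz']
  · by_cases hz' : z' = 0
    · refine (inTable_A23 35).of_iso ?_
      apply iso_T23 !![1, 0; 0, 1] !![1, 0, 0; 0, 1, 0; 0, 0, z⁻¹] <;> simp [hz, hz']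
    · refine (inTable_A23 36).of_iso ?_
      apply iso_T23 !![z' / z, (z' / z) ^ 2; 0, (z' / z) ^ 2]
        !![(z' / z) ^ 2, 0, 0; 0, 1, 0; 0, 0, z' / z / z] <;> simp [hz, hz'] <;> grind

theorem inTable_P31_P21_skewMat (ht : t ≠ 0) (z z' : ℂ) :
    InTable (T23 1 (t • P31) P21 (skewMat 0 0 z) (skewMat 0 0 z')) := by
  by_cases hz : z = 0
  · by_cases hz' : z' = 0
    · refine (inTable_A23 37).of_iso ?_
      apply iso_T23 !![1, 0; 0, 1] !![1, 0, 0; 0, 1, 0; 0, 0, t⁻¹] <;> simp [hz, hz', ht]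
    · refine (inTable_A23 38).of_iso ?_
      apply iso_T23 !![z' / t, 0; 0, (z' / t) ^ 2]
        !![(z' / t) ^ 2, 0, 0; 0, 1, 0; 0, 0, z' / t / t] <;> simp [hz, hz', ht] <;> grind
  · obtain ⟨c, hc⟩ := IsAlgClosed.exists_eq_mul_self (t / z)
    have hc₀ : c ≠ 0 := by grind
    refine (inTable_A23 39).of_iso ?_
    apply iso_T23 !![1, z' / z; 0, 1] !![c, 0, 0; 0, c, -(z' / z) * c / t; 0, 0, c / t] <;>
      simp [ht, hc₀] <;> grind

theorem inTable_P23_P31_P21_skewMat (hs : s ≠ 0) (t z' : ℂ) :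
    InTable (T23 1 (s • P23 + t • P31) P21 0 (skewMat 0 0 z')) := by
  by_cases hz' : z' = 0
  · rw [hz', skewMat_zero]
    by_cases ht : t = 0
    · refine (inTable_A23 40).of_iso ?_
      apply iso_T23 !![1, 0; 0, 1] !![1, 0, 0; 0, 1, 0; 0, 0, s] <;> simp [hs, ht]
    · refine (inTable_A43 (mul_ne_zero hs ht)).of_iso ?_
      apply iso_T23 !![1, 0; 0, 1] !![1, 0, 0; 0, 1, 0; 0, 0, s] <;> simp [hs]
  · refine (inTable_A44 (s * t)).of_iso ?_
    apply iso_T23 !![s * z', 0; 0, (s * z') ^ 2]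
      !![(s * z') ^ 2, 0, 0; 0, 1, 0; 0, 0, s * z' * s] <;> simp [hs, hz'] <;> grind

theorem IsNilpotentJordan.inTable_P23_P31_P21
    (hμ : IsNilpotentJordan (T23 1 (s • P23 + t • P31) P21 W Θ)) :
    InTable (T23 1 (s • P23 + t • P31) P21 W Θ) := by
  obtain ⟨⟨x, y, z, rfl⟩, x', y', z', rfl⟩ := hμ.jordan.exists_eq_skewMat
  obtain ⟨rfl, rfl, rfl, rfl, hsz⟩ := hμ.form_relations_of_P23_P31_P21
  by_cases hs : s = 0
  · rw [hs, zero_smul, zero_add]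
    by_cases ht : t = 0
    · rw [ht, zero_smul]
      exact inTable_P21_skewMat z z'
    · exact inTable_P31_P21_skewMat ht z z'
  · rw [(mul_eq_zero.1 hsz).resolve_left hs, skewMat_zero]
    exact inTable_P23_P31_P21_skewMat hs t z'

theorem IsJordanSuper.action_relations_of_lowMat_lowMat
    (hJ : IsJordanSuper (T23 1 (lowMat p q r) (lowMat p' q' r') W Θ)) :
    q * p' = 0 ∧ p * q' = 0 ∧ p' * q' = 0 := by
  have h₁ := congrFun (hJ.identity_eeeo ![1, 0] ![1, 0] ![1, 0] ![0, 0, 1]) 0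
  have h₂ := congrFun (hJ.identity_eeeo ![0, 1] ![1, 0] ![1, 0] ![0, 0, 1]) 0
  have h₃ := congrFun (hJ.identity_oeee ![1, 0] ![1, 0] ![1, 0] ![0, 0, 1]) 0
  simp at h₁ h₂ h₃
  grind

theorem IsNilpotentJordan.inTable_one_lowMat_lowMat
    (hμ : IsNilpotentJordan (T23 1 (lowMat p q r) (lowMat p' q' r') W Θ)) :
    InTable (T23 1 (lowMat p q r) (lowMat p' q' r') W Θ) := by
  obtain ⟨hqp', hpq', hpq''⟩ := hμ.jordan.action_relations_of_lowMat_lowMat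
  by_cases hp' : p' = 0
  · by_cases hq' : q' = 0
    · by_cases hr' : r' = 0
      · rw [hp', hq', hr', lowMat_zero] at hμ ⊢
        exact hμ.inTable_lowMat_zero (.inr rfl)
      · apply hμ.inTable_of_changeBasis
          (fun _ _ h => h.inTable_P23_P31_P21 (s := q) (t := p / r')) !![1, -r / r'; 0, 1]
          !![r', 0, 0; 0, 0, 1; 0, 1, 0] <;> simp [hp', hq', hr']
    · apply hμ.inTable_of_changeBasis
        (fun _ _ h => h.inTable_P23_P31_P21 (s := r - q * r' / q') (t := 0)) !![1, -q / q'; 0, 1]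
        !![r', q', 0; 0, 0, 1; 1, 0, 0] <;> simp [hp', hq']
      grind
  · apply hμ.inTable_of_changeBasis
      (fun _ _ h => h.inTable_P23_P31_P21 (s := 0) (t := (r - p * r' / p') / p'))
      !![1, -p / p'; 0, 1] !![p', 0, 0; 0, 1, 0; 0, -r' / p', 1] <;> simp [hp'] <;> grind

theorem IsNilpotentJordan.inTable {μ : Tensor 2 3} (hμ : IsNilpotentJordan μ) : InTable μ := by
  obtain ⟨a, ha, _, _, _, _, _, _, _, _, hiso⟩ := hμ.exists_iso_T23_lowMat
  have hT := IsNilpotentJordan.of_iso hiso.symm hμ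
  rcases ha with rfl | rfl
  · exact hT.inTable_lowMat_lowMat.of_iso hiso
  · exact hT.inTable_one_lowMat_lowMat.of_iso hiso

end NonzeroEvenSquare

section WordImages

open Module Submodule

theorem map₂_span_image_eq_of_monomial {K V ι : Type*} [Field K] [AddCommGroup V] [Module K V]
    {b : Basis ι K V} {f : V →ₗ[K] V →ₗ[K] V} {r : ι → ι → Option ι}
    (hr : ∀ i j k, b.repr (f (b i) (b j)) k ≠ 0 ↔ r i j = some k) (A B : Set ι) :
    map₂ f (span K (b '' A)) (span K (b '' B)) =
      span K (b '' {k | ∃ i ∈ A, ∃ j ∈ B, r i j = some k}) := by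
  have eq_smul {i j k} (h : r i j = some k) : f (b i) (b j) = b.repr (f (b i) (b j)) k • b k := by
    refine b.ext_elem fun l => ?_
    rcases eq_or_ne k l with rfl | hkl
    · simp
    · simpa [h, hkl] using (hr i j l).not
  rw [map₂_span_span]
  apply le_antisymm <;> rw [span_le]
  · rintro _ ⟨_, ⟨i, hi, rfl⟩, _, ⟨j, hj, rfl⟩, rfl⟩
    exact b.mem_span_image.2 fun k hk =>
      ⟨i, hi, j, hj, (hr i j k).1 (Finsupp.mem_support_iff.1 hk)⟩
  · rintro _ ⟨k, ⟨i, hi, j, hj, h⟩, rfl⟩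
    rw [SetLike.mem_coe, ← smul_mem_iff _ ((hr i j k).2 h), ← eq_smul h]
    exact subset_span ⟨b i, ⟨i, hi, rfl⟩, b j, ⟨j, hj, rfl⟩, rfl⟩

/-- Nonassociative words in a letter `even` standing for the even part of a superalgebra and a
letter `odd` standing for its odd part. -/
inductive GradedWord
  | even : GradedWord
  | odd : GradedWord
  | mul : GradedWord → GradedWord → GradedWord

instance : Mul GradedWord := ⟨.mul⟩

variable {m n : ℕ}

/-- The subspace obtained by evaluating a word in the even and the odd part of a superalgebra. -/
def wordImage (μ : Tensor m n) : GradedWord → Submodule ℂ (GV m n)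
  | .even => LinearMap.range (LinearMap.inl ℂ _ _)
  | .odd => LinearMap.range (LinearMap.inr ℂ _ _)
  | .mul v w => map₂ μ.mul (wordImage μ v) (wordImage μ w)

theorem Iso.finrank_wordImage_eq {μ ν : Tensor m n} (h : Iso μ ν) (w : GradedWord) :
    finrank ℂ (wordImage μ w) = finrank ℂ (wordImage ν w) := by
  obtain ⟨T, S, h⟩ := h
  let φ : GV m n →ₗ[ℂ] GV m n := T.prodCongr S
  have map_wordImage : (wordImage μ w).map φ = wordImage ν w := by
    induction w with
    | even =>
      have hφ : φ ∘ₗ LinearMap.inl ℂ _ _ = LinearMap.inl ℂ _ _ ∘ₗ T.toLinearMap := by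
        ext <;> simp [φ]
      rw [wordImage, ← LinearMap.range_comp, hφ,
        LinearMap.range_comp_of_range_eq_top _ T.range, wordImage]
    | odd =>
      have hφ : φ ∘ₗ LinearMap.inr ℂ _ _ = LinearMap.inr ℂ _ _ ∘ₗ S.toLinearMap := by
        ext <;> simp [φ]
      rw [wordImage, ← LinearMap.range_comp, hφ,
        LinearMap.range_comp_of_range_eq_top _ S.range, wordImage]
    | mul v w hv hw =>
      have hφ : μ.mul.compr₂ φ = ν.mul.compl₁₂ φ φ := LinearMap.ext₂ h
      rw [wordImage, map_map₂, hφ, ← map₂_map_map, hv, hw, wordImage]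
  rw [← map_wordImage]
  exact ((T.prodCongr S).finrank_map_eq (wordImage μ w)).symm

/-- The multiplication pattern of a monomial superalgebra, one in which the product of two elements
of the standard homogeneous basis is `0` or a nonzero multiple of a third one: the index of the
latter, for even-even, even-odd and odd-odd products. -/
structure Pattern (m n : ℕ) where
  evenMul : Fin m → Fin m → Option (Fin m)
  act : Fin m → Fin n → Option (Fin n)
  oddMul : Fin n → Fin n → Option (Fin m)

/-- `μ` is a monomial superalgebra with multiplication pattern `r`. -/
structure HasPattern (μ : Tensor m n) (r : Pattern m n) : Prop where
  evenMul : ∀ i j k, μ.1 i j k ≠ 0 ↔ r.evenMul i j = some k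
  act : ∀ i j k, μ.2.1 i j k ≠ 0 ↔ r.act i j = some k
  oddMul : ∀ i j k, μ.2.2 i j k ≠ 0 ↔ r.oddMul i j = some k

/-- The homogeneous basis `e₁, …, e_m, f₁, …, f_n`. -/
def homogeneousBasis (m n : ℕ) : Basis (Fin m ⊕ Fin n) ℂ (GV m n) :=
  (Pi.basisFun ℂ (Fin m)).prod (Pi.basisFun ℂ (Fin n))

namespace Pattern

variable (r : Pattern m n) {μ : Tensor m n}

/-- The pattern of all products of homogeneous basis elements. -/
def mul : Fin m ⊕ Fin n → Fin m ⊕ Fin n → Option (Fin m ⊕ Fin n)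
  | .inl i, .inl j => (r.evenMul i j).map .inl
  | .inl i, .inr j => (r.act i j).map .inr
  | .inr i, .inl j => (r.act j i).map .inr
  | .inr i, .inr j => (r.oddMul i j).map .inl

/-- The basis elements spanning the image of a word in a monomial superalgebra. -/
def wordSupport : GradedWord → Finset (Fin m ⊕ Fin n)
  | .even => Finset.univ.map .inl
  | .odd => Finset.univ.map .inr
  | .mul v w => {k | ∃ i ∈ wordSupport v, ∃ j ∈ wordSupport w, r.mul i j = some k}

variable {r}

theorem repr_mul_ne_zero_iff (hμ : HasPattern μ r) (i j k : Fin m ⊕ Fin n) :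
    (homogeneousBasis m n).repr
      (μ.mul (homogeneousBasis m n i) (homogeneousBasis m n j)) k ≠ 0 ↔ r.mul i j = some k := by
  rcases i with i | i <;> rcases j with j | j <;> rcases k with k | k <;>
    simp [homogeneousBasis, Tensor.mul_eq, Tensor.evenMul_single, Tensor.act_single,
      Tensor.oddMul_single, mul, ← hμ.evenMul, ← hμ.act, ← hμ.oddMul]

theorem wordImage_eq_span (hμ : HasPattern μ r) (w : GradedWord) :
    wordImage μ w = span ℂ (homogeneousBasis m n '' r.wordSupport w) := by
  induction w with
  | even =>
    rw [wordImage, LinearMap.range_eq_map, ← (Pi.basisFun ℂ (Fin m)).span_eq, map_span]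
    congr 1
    ext
    simp [wordSupport, homogeneousBasis]
  | odd =>
    rw [wordImage, LinearMap.range_eq_map, ← (Pi.basisFun ℂ (Fin n)).span_eq, map_span]
    congr 1
    ext
    simp [wordSupport, homogeneousBasis]
  | mul v w hv hw =>
    rw [wordImage, hv, hw, map₂_span_image_eq_of_monomial (repr_mul_ne_zero_iff hμ)]
    simp [wordSupport]

theorem finrank_wordImage (hμ : HasPattern μ r) (w : GradedWord) :
    finrank ℂ (wordImage μ w) = (r.wordSupport w).card := by
  rw [wordImage_eq_span hμ, Set.image_eq_range]
  refine (finrank_span_eq_card ((homogeneousBasis m n).linearIndependent.comp _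
    Subtype.val_injective)).trans ?_
  simp

end Pattern

end WordImages

section Patterns

/-- The words whose images are used to tell the algebras of the classification apart. -/
def separatingWords : List GradedWord :=
  [.odd * .even, .odd * .odd, .even * .even, .odd * .odd * .odd, .even * .even * .odd,
    .odd * .odd * .even, .odd * .even * .even, .odd * .even * .odd, .odd * .even * .even * .odd]

/-- The dimensions of the images of the `separatingWords` in a monomial superalgebra. -/
def Pattern.signature {m n : ℕ} (r : Pattern m n) : List ℕ :=
  separatingWords.map fun w => (r.wordSupport w).card

theorem Pattern.signature_eq_of_iso {m n : ℕ} {μ ν : Tensor m n} {r s : Pattern m n}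
    (hμ : HasPattern μ r) (hν : HasPattern ν s) (h : Iso μ ν) : r.signature = s.signature :=
  List.map_congr_left fun w _ => by
    rw [← r.finrank_wordImage hμ, ← s.finrank_wordImage hν, h.finrank_wordImage_eq]

/-- The pattern of an alternating form, from those of `f₁f₂`, `f₁f₃` and `f₂f₃`. -/
def skewPattern (φ : Fin 3 → Option (Fin 2)) : Fin 3 → Fin 3 → Option (Fin 2) :=
  ![![none, φ 0, φ 1], ![φ 0, none, φ 2], ![φ 1, φ 2, none]]

/-- The pattern of a tensor `T23 a R₁ R₂ W Θ`: `a` says whether the scalar is nonzero, `ρ₁` and `ρ₂`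
give the products of `e₁` and `e₂` with `f₁, f₂, f₃`, and `φ` gives `f₁f₂, f₁f₃, f₂f₃`. -/
def T23Pattern (a : Bool) (ρ₁ ρ₂ : Fin 3 → Option (Fin 3)) (φ : Fin 3 → Option (Fin 2)) :
    Pattern 2 3 where
  evenMul i j := if i = 0 ∧ j = 0 ∧ a then some 1 else none
  act i := if i = 0 then ρ₁ else ρ₂
  oddMul := skewPattern φ

theorem hasPattern_T23 {a : ℂ} {R₁ R₂ W Θ : Fin 3 → Fin 3 → ℂ} {b : Bool}
    {ρ₁ ρ₂ : Fin 3 → Option (Fin 3)} {φ : Fin 3 → Option (Fin 2)} (ha : a ≠ 0 ↔ b)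
    (h₁ : ∀ i j, R₁ i j ≠ 0 ↔ ρ₁ i = some j) (h₂ : ∀ i j, R₂ i j ≠ 0 ↔ ρ₂ i = some j)
    (hW : ∀ i j, W i j ≠ 0 ↔ skewPattern φ i j = some 0)
    (hΘ : ∀ i j, Θ i j ≠ 0 ↔ skewPattern φ i j = some 1) :
    HasPattern (T23 a R₁ R₂ W Θ) (T23Pattern b ρ₁ ρ₂ φ) where
  evenMul i j k := by
    simp [T23, T23Pattern, ← ha]
    grind
  act := by simp [T23, T23Pattern, Fin.forall_fin_two, h₁, h₂]
  oddMul := by simp [T23, T23Pattern, Fin.forall_fin_two, hW, hΘ]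

/-- The patterns of the algebras in the table `A23`. -/
def pattern23 : Fin 41 → Pattern 2 3 :=
  ![ T23Pattern false ![none, none, none] ![none, none, none] ![none, none, none],
     T23Pattern false ![none, none, none] ![none, none, none] ![some 0, none, none],
     T23Pattern false ![none, none, none] ![none, none, none] ![some 0, some 1, none],
     T23Pattern false ![none, some 0, none] ![none, none, none] ![none, none, none],
     T23Pattern false ![none, some 0, none] ![none, none, none] ![some 1, none, none],
     T23Pattern false ![none, some 0, none] ![none, none, none] ![none, none, some 1],
     T23Pattern false ![none, some 0, none] ![none, none, none] ![none, some 1, none],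
     T23Pattern false ![none, some 0, none] ![none, none, none] ![none, none, some 0],
     T23Pattern false ![none, some 0, none] ![none, none, none] ![some 1, none, some 0],
     T23Pattern false ![none, some 0, none] ![none, none, none] ![none, some 1, some 0],
     T23Pattern false ![none, some 0, none] ![none, none, some 0] ![none, none, none],
     T23Pattern false ![none, some 0, none] ![none, none, some 0] ![none, none, some 1],
     T23Pattern false ![none, some 0, none] ![none, some 2, none] ![none, none, none],
     T23Pattern false ![none, some 0, none] ![none, some 2, none] ![some 1, none, none],
     T23Pattern false ![none, some 0, none] ![none, none, some 1] ![none, none, none],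
     T23Pattern false ![none, some 0, some 1] ![none, none, none] ![none, none, none],
     T23Pattern false ![none, some 0, some 1] ![none, none, none] ![none, none, some 1],
     T23Pattern false ![none, some 0, some 1] ![none, none, none] ![none, some 1, none],
     T23Pattern false ![none, some 0, some 1] ![none, none, some 0] ![none, none, none],
     T23Pattern false ![none, some 0, some 1] ![none, none, some 0] ![none, none, some 1],
     T23Pattern true ![none, none, none] ![none, none, none] ![none, none, none],
     T23Pattern true ![none, none, none] ![none, none, none] ![some 0, none, none],
     T23Pattern true ![none, none, none] ![none, none, none] ![some 1, none, none],
     T23Pattern true ![none, none, none] ![none, none, none] ![some 0, some 1, none],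
     T23Pattern true ![none, some 0, none] ![none, none, none] ![none, none, none],
     T23Pattern true ![none, some 0, none] ![none, none, none] ![none, none, some 1],
     T23Pattern true ![none, some 0, none] ![none, none, none] ![some 1, none, none],
     T23Pattern true ![none, some 0, none] ![none, none, none] ![none, some 1, none],
     T23Pattern true ![none, some 0, none] ![none, none, none] ![none, none, some 0],
     T23Pattern true ![none, some 0, none] ![none, none, none] ![some 1, none, some 0],
     T23Pattern true ![none, some 0, some 1] ![none, none, none] ![none, none, none],
     T23Pattern true ![none, some 0, some 1] ![none, none, none] ![none, some 1, none],
     T23Pattern true ![none, some 0, some 1] ![none, none, none] ![none, none, some 1],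
     T23Pattern true ![none, none, none] ![none, some 0, none] ![none, none, none],
     T23Pattern true ![none, none, none] ![none, some 0, none] ![none, none, some 1],
     T23Pattern true ![none, none, none] ![none, some 0, none] ![none, none, some 0],
     T23Pattern true ![none, some 0, none] ![none, some 0, none] ![none, none, some 0],
     T23Pattern true ![none, none, some 0] ![none, some 0, none] ![none, none, none],
     T23Pattern true ![none, none, some 0] ![none, some 0, none] ![none, none, some 1],
     T23Pattern true ![none, none, some 0] ![none, some 0, none] ![none, none, some 0],
     T23Pattern true ![none, some 2, none] ![none, some 0, none] ![none, none, none] ]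

/-- The pattern of the algebras in the family `A31`. -/
def pattern31 : Pattern 2 3 :=
  T23Pattern true ![none, some 0, none] ![none, none, none] ![none, some 1, some 0]

/-- The pattern of the algebras in the family `A43`. -/
def pattern43 : Pattern 2 3 :=
  T23Pattern true ![none, some 2, some 0] ![none, some 0, none] ![none, none, none]

/-- The pattern of the algebra `A44 p`, which depends on whether `p` is zero. -/
def pattern44 (isZero : Bool) : Pattern 2 3 :=
  T23Pattern true ![none, some 2, if isZero then none else some 0] ![none, some 0, none]
    ![none, none, some 1]

theorem hasPattern_A23 (i : Fin 41) : HasPattern (A23 i) (pattern23 i) := by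
  fin_cases i <;> apply hasPattern_T23 <;>
    simp [P21, P31, P32, P23, W12, W13, W23, skewPattern, Fin.forall_fin_succ]

theorem hasPattern_A31 {l : ℂ} (hl : l ≠ 0) : HasPattern (A31 l) pattern31 := by
  apply hasPattern_T23 <;> simp [P21, W13, W23, skewPattern, Fin.forall_fin_succ, hl]

theorem hasPattern_A43 {g : ℂ} (hg : g ≠ 0) : HasPattern (A43 g) pattern43 := by
  apply hasPattern_T23 <;> simp [P21, P23, P31, skewPattern, Fin.forall_fin_succ, hg]

theorem exists_hasPattern_A44 (p : ℂ) : ∃ isZero, HasPattern (A44 p) (pattern44 isZero) := by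
  refine ⟨p = 0, ?_⟩
  apply hasPattern_T23 <;> by_cases hp : p = 0 <;>
    simp [P21, P23, P31, W23, skewPattern, Fin.forall_fin_succ, hp]

theorem signature_pattern23_eq : ∀ i j : Fin 41, i < j →
    (pattern23 i).signature = (pattern23 j).signature →
    (i, j) ∈ [(3, 10), (4, 6), (7, 11), (8, 9), (14, 15), (14, 18), (15, 18), (26, 27), (33, 37),
      (34, 38), (36, 39)] := by
  decide +kernel

theorem signature_pattern23_eq_pattern31 : ∀ i : Fin 41,
    (pattern23 i).signature = pattern31.signature → i = 29 := by
  decide +kernel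

end Patterns

section Invariants

variable {m n : ℕ} {μ ν : Tensor m n} {l : ℂ}

/-- Some nonzero even element annihilates the odd part. -/
def HasEvenAnnihilator (μ : Tensor m n) : Prop :=
  ∃ u, u ≠ 0 ∧ ∀ f, μ.act u f = 0

/-- The even elements act on the odd part by commuting operators. -/
def EvenActionsCommute (μ : Tensor m n) : Prop :=
  ∀ u v f, μ.act u (μ.act v f) = μ.act v (μ.act u f)

/-- The odd-odd product pairs the image and the kernel of every even operator to zero:
`(uf)g = 0` whenever `ug = 0`. -/
def ImageAnnihilatesKernel (μ : Tensor m n) : Prop :=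
  ∀ u f g, μ.act u g = 0 → μ.oddMul (μ.act u f) g = 0

/-- An odd element annihilated by all squares `u²` is annihilated by the whole even part. -/
def SquaresDetectAnnihilation (μ : Tensor m n) : Prop :=
  ∀ f, (∀ u, μ.act (μ.evenMul u u) f = 0) → ∀ v, μ.act v f = 0

/-- The identity `((fg)f)g = l(fg)²` for odd `f, g` with `(fg)g = 0`, which characterises the
parameter of the family `A31`. -/
def ProductSquareRatio (l : ℂ) (μ : Tensor m n) : Prop :=
  ∀ f g, μ.act (μ.oddMul f g) g = 0 →
    μ.oddMul (μ.act (μ.oddMul f g) f) g = l • μ.evenMul (μ.oddMul f g) (μ.oddMul f g)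

/-- The identity `u(uf) = l(u²f)`, which characterises the parameter of the families `A43` and
`A44`. -/
def ActionSquareRatio (l : ℂ) (μ : Tensor m n) : Prop :=
  ∀ u f, μ.act u (μ.act u f) = l • μ.act (μ.evenMul u u) f

theorem HasEvenAnnihilator.of_iso (hI : Iso μ ν) (h : HasEvenAnnihilator μ) :
    HasEvenAnnihilator ν := by
  obtain ⟨T, S, -, hact, -⟩ := iso_iff.1 hI
  obtain ⟨u, hu, h⟩ := h
  refine ⟨T u, by simpa using hu, S.surjective.forall.2 fun f => ?_⟩
  rw [← hact, h, map_zero]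

theorem EvenActionsCommute.of_iso (hI : Iso μ ν) (h : EvenActionsCommute μ) :
    EvenActionsCommute ν := by
  obtain ⟨T, S, -, hact, -⟩ := iso_iff.1 hI
  refine T.surjective.forall₂.2 fun u v => S.surjective.forall.2 fun f => ?_
  rw [← hact, ← hact, h u v f, hact, hact]

theorem ImageAnnihilatesKernel.of_iso (hI : Iso μ ν) (h : ImageAnnihilatesKernel μ) :
    ImageAnnihilatesKernel ν := by
  obtain ⟨T, S, -, hact, hodd⟩ := iso_iff.1 hI
  refine T.surjective.forall.2 fun u => S.surjective.forall₂.2 fun f g hg => ?_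
  rw [← hact, S.map_eq_zero_iff] at hg
  rw [← hact, ← hodd, h u f g hg, map_zero]

theorem SquaresDetectAnnihilation.of_iso (hI : Iso μ ν) (h : SquaresDetectAnnihilation μ) :
    SquaresDetectAnnihilation ν := by
  obtain ⟨T, S, heven, hact, -⟩ := iso_iff.1 hI
  refine S.surjective.forall.2 fun f hf => T.surjective.forall.2 fun v => ?_
  rw [T.surjective.forall] at hf
  simp only [← heven, ← hact, S.map_eq_zero_iff] at hf ⊢
  exact h f hf v

theorem ProductSquareRatio.of_iso (hI : Iso μ ν) (h : ProductSquareRatio l μ) :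
    ProductSquareRatio l ν := by
  obtain ⟨T, S, heven, hact, hodd⟩ := iso_iff.1 hI
  refine S.surjective.forall₂.2 fun f g hg => ?_
  rw [← hodd, ← hact, S.map_eq_zero_iff] at hg
  simp only [← hodd, ← hact, ← heven, h f g hg, map_smul]

theorem ActionSquareRatio.of_iso (hI : Iso μ ν) (h : ActionSquareRatio l μ) :
    ActionSquareRatio l ν := by
  obtain ⟨T, S, heven, hact, -⟩ := iso_iff.1 hI
  refine T.surjective.forall.2 fun u => S.surjective.forall.2 fun f => ?_
  simp only [← heven, ← hact, h u f, map_smul]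

end Invariants

section InvariantValues

attribute [local simp] P21 P31 P32 P23 W12 W13 W23 Fin.forall_fin_succ Fin.sum_univ_three
  evenMul_T23 act_T23 oddMul_T23 dotProduct Matrix.vecHead Matrix.vecTail funext_iff

theorem hasEvenAnnihilator_T23 (a : ℂ) (R W Θ : Fin 3 → Fin 3 → ℂ) :
    HasEvenAnnihilator (T23 a R 0 W Θ) :=
  ⟨![0, 1], by simp, by simp⟩

theorem not_hasEvenAnnihilator_P21_P31 (a : ℂ) (W Θ : Fin 3 → Fin 3 → ℂ) :
    ¬ HasEvenAnnihilator (T23 a P21 P31 W Θ) := by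
  rintro ⟨u, hu, h⟩
  have h₂ := congrFun (h ![0, 1, 0]) 0
  have h₃ := congrFun (h ![0, 0, 1]) 0
  simp_all

theorem not_hasEvenAnnihilator_P21_P32 (a : ℂ) (W Θ : Fin 3 → Fin 3 → ℂ) :
    ¬ HasEvenAnnihilator (T23 a P21 P32 W Θ) := by
  rintro ⟨u, hu, h⟩
  have h₂ := congrFun (h ![0, 1, 0]) 0
  have h₃ := congrFun (h ![0, 0, 1]) 1
  simp_all

theorem not_hasEvenAnnihilator_P21_add_P32_P31 (a : ℂ) (W Θ : Fin 3 → Fin 3 → ℂ) :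
    ¬ HasEvenAnnihilator (T23 a (P21 + P32) P31 W Θ) := by
  rintro ⟨u, hu, h⟩
  have h₂ := congrFun (h ![0, 1, 0]) 0
  have h₃ := congrFun (h ![0, 0, 1]) 0
  simp_all

theorem evenActionsCommute_P21_add_P32_P31 (a : ℂ) (W Θ : Fin 3 → Fin 3 → ℂ) :
    EvenActionsCommute (T23 a (P21 + P32) P31 W Θ) := by
  intro u v f
  simp
  ring

theorem not_evenActionsCommute_P21_P32 (a : ℂ) (W Θ : Fin 3 → Fin 3 → ℂ) :
    ¬ EvenActionsCommute (T23 a P21 P32 W Θ) := by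
  intro h
  simpa using congrFun (h ![1, 0] ![0, 1] ![0, 0, 1]) 0

theorem imageAnnihilatesKernel_smul_W23_W12 (a c : ℂ) :
    ImageAnnihilatesKernel (T23 a P21 0 (c • W23) W12) := by
  intro u f g h
  have h₀ := congrFun h 0
  simp at h₀ ⊢
  grind

theorem not_imageAnnihilatesKernel_smul_W13 (a : ℂ) (W : Fin 3 → Fin 3 → ℂ) {l : ℂ}
    (hl : l ≠ 0) : ¬ ImageAnnihilatesKernel (T23 a P21 0 W (l • W13)) := by
  intro h
  simpa [hl] using congrFun (h ![1, 0] ![0, 1, 0] ![0, 0, 1] (by simp)) 1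

theorem squaresDetectAnnihilation_smul_P21_P21 (c : ℂ) (W Θ : Fin 3 → Fin 3 → ℂ) :
    SquaresDetectAnnihilation (T23 1 (c • P21) P21 W Θ) := by
  intro f h v
  have h₀ := congrFun (h ![1, 0]) 0
  simp_all

theorem not_squaresDetectAnnihilation_P31_P21 (a : ℂ) (W Θ : Fin 3 → Fin 3 → ℂ) :
    ¬ SquaresDetectAnnihilation (T23 a P31 P21 W Θ) := by
  intro h
  simpa using congrFun (h ![0, 0, 1] (by simp) ![1, 0]) 0

theorem productSquareRatio_A31_iff {l l' : ℂ} : ProductSquareRatio l (A31 l') ↔ l' = l := by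
  refine ⟨fun h => ?_, ?_⟩
  · simpa [A31] using congrFun (h ![0, 1, 0] ![0, 0, 1] (by simp [A31])) 1
  · rintro rfl f g h
    have h₀ := congrFun h 0
    simp [A31] at h₀ ⊢
    grind

theorem actionSquareRatio_P23_add_smul_P31_iff {l l' : ℂ} (W Θ : Fin 3 → Fin 3 → ℂ) :
    ActionSquareRatio l (T23 1 (P23 + l' • P31) P21 W Θ) ↔ l' = l := by
  refine ⟨fun h => ?_, ?_⟩
  · simpa using congrFun (h ![1, 0] ![0, 1, 0]) 0
  · rintro rfl u f
    simp
    ring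

end InvariantValues

section PairwiseNonisomorphic

variable {i j : Fin 41} {l g p : ℂ}

theorem not_iso_A23_A23 (hij : i < j) : ¬ Iso (A23 i) (A23 j) := by
  intro hI
  have squares₀ (W Θ) : SquaresDetectAnnihilation (T23 1 0 P21 W Θ) := by
    simpa using squaresDetectAnnihilation_smul_P21_P21 0 W Θ
  have squares₁ (W Θ) : SquaresDetectAnnihilation (T23 1 P21 P21 W Θ) := by
    simpa using squaresDetectAnnihilation_smul_P21_P21 1 W Θ
  have kernel₀ (a) : ImageAnnihilatesKernel (T23 a P21 0 0 W12) := by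
    simpa using imageAnnihilatesKernel_smul_W23_W12 a 0
  have kernel₁ (a) : ImageAnnihilatesKernel (T23 a P21 0 W23 W12) := by
    simpa using imageAnnihilatesKernel_smul_W23_W12 a 1
  have not_kernel (a W) : ¬ ImageAnnihilatesKernel (T23 a P21 0 W W13) := by
    simpa using not_imageAnnihilatesKernel_smul_W13 a W one_ne_zero
  have hsig := signature_pattern23_eq i j hij <|
    Pattern.signature_eq_of_iso (hasPattern_A23 i) (hasPattern_A23 j) hI
  simp only [List.mem_cons, Prod.mk.injEq, List.not_mem_nil, or_false] at hsig
  rcases hsig with ⟨rfl, rfl⟩ | ⟨rfl, rfl⟩ | ⟨rfl, rfl⟩ | ⟨rfl, rfl⟩ | ⟨rfl, rfl⟩ | ⟨rfl, rfl⟩ |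
    ⟨rfl, rfl⟩ | ⟨rfl, rfl⟩ | ⟨rfl, rfl⟩ | ⟨rfl, rfl⟩ | ⟨rfl, rfl⟩
  · exact not_hasEvenAnnihilator_P21_P31 _ _ _ (.of_iso hI (hasEvenAnnihilator_T23 ..))
  · exact not_kernel _ _ (.of_iso hI (kernel₀ _))
  · exact not_hasEvenAnnihilator_P21_P31 _ _ _ (.of_iso hI (hasEvenAnnihilator_T23 ..))
  · exact not_kernel _ _ (.of_iso hI (kernel₁ _))
  · exact not_hasEvenAnnihilator_P21_P32 _ _ _ (.of_iso hI.symm (hasEvenAnnihilator_T23 ..))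
  · exact not_evenActionsCommute_P21_P32 _ _ _
      (.of_iso hI.symm (evenActionsCommute_P21_add_P32_P31 _ _ _))
  · exact not_hasEvenAnnihilator_P21_add_P32_P31 _ _ _ (.of_iso hI (hasEvenAnnihilator_T23 ..))
  · exact not_kernel _ _ (.of_iso hI (kernel₀ _))
  · exact not_squaresDetectAnnihilation_P31_P21 _ _ _ (.of_iso hI (squares₀ _ _))
  · exact not_squaresDetectAnnihilation_P31_P21 _ _ _ (.of_iso hI (squares₀ _ _))
  · exact not_squaresDetectAnnihilation_P31_P21 _ _ _ (.of_iso hI (squares₁ _ _))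

theorem A23_injective_of_iso (hI : Iso (A23 i) (A23 j)) : i = j := by
  by_contra hne
  rcases lt_or_gt_of_ne hne with hij | hij
  · exact not_iso_A23_A23 hij hI
  · exact not_iso_A23_A23 hij hI.symm

theorem not_iso_A23_A31 (hl : l ≠ 0) : ¬ Iso (A23 i) (A31 l) := by
  intro hI
  obtain rfl := signature_pattern23_eq_pattern31 i <|
    Pattern.signature_eq_of_iso (hasPattern_A23 i) (hasPattern_A31 hl) hI
  have kernel : ImageAnnihilatesKernel (T23 1 P21 0 W23 W12) := by
    simpa using imageAnnihilatesKernel_smul_W23_W12 1 1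
  exact not_imageAnnihilatesKernel_smul_W13 _ _ hl (.of_iso hI kernel)

theorem not_iso_A23_A43 (hg : g ≠ 0) : ¬ Iso (A23 i) (A43 g) := fun hI =>
  have signature_ne : ∀ i, (pattern23 i).signature ≠ pattern43.signature := by decide +kernel
  signature_ne i (Pattern.signature_eq_of_iso (hasPattern_A23 i) (hasPattern_A43 hg) hI)

theorem not_iso_A23_A44 : ¬ Iso (A23 i) (A44 p) := fun hI =>
  have signature_ne : ∀ i b, (pattern23 i).signature ≠ (pattern44 b).signature := by
    decide +kernel
  have ⟨b, hb⟩ := exists_hasPattern_A44 p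
  signature_ne i b (Pattern.signature_eq_of_iso (hasPattern_A23 i) hb hI)

theorem not_iso_A31_A43 (hl : l ≠ 0) (hg : g ≠ 0) : ¬ Iso (A31 l) (A43 g) := fun hI =>
  have signature_ne : pattern31.signature ≠ pattern43.signature := by decide +kernel
  signature_ne (Pattern.signature_eq_of_iso (hasPattern_A31 hl) (hasPattern_A43 hg) hI)

theorem not_iso_A31_A44 (hl : l ≠ 0) : ¬ Iso (A31 l) (A44 p) := fun hI =>
  have signature_ne : ∀ b, pattern31.signature ≠ (pattern44 b).signature := by decide +kernel
  have ⟨b, hb⟩ := exists_hasPattern_A44 p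
  signature_ne b (Pattern.signature_eq_of_iso (hasPattern_A31 hl) hb hI)

theorem not_iso_A43_A44 (hg : g ≠ 0) : ¬ Iso (A43 g) (A44 p) := fun hI =>
  have signature_ne : ∀ b, pattern43.signature ≠ (pattern44 b).signature := by decide +kernel
  have ⟨b, hb⟩ := exists_hasPattern_A44 p
  signature_ne b (Pattern.signature_eq_of_iso (hasPattern_A43 hg) hb hI)

theorem iso_A31_iff {l₁ l₂ : ℂ} : Iso (A31 l₁) (A31 l₂) ↔ l₁ = l₂ :=
  ⟨fun hI => (productSquareRatio_A31_iff.1 (.of_iso hI (productSquareRatio_A31_iff.2 rfl))).symm,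
    fun h => h ▸ Iso.refl _⟩

theorem iso_P23_add_smul_P31_iff {l₁ l₂ : ℂ} (W Θ : Fin 3 → Fin 3 → ℂ) :
    Iso (T23 1 (P23 + l₁ • P31) P21 W Θ) (T23 1 (P23 + l₂ • P31) P21 W Θ) ↔ l₁ = l₂ :=
  ⟨fun hI => ((actionSquareRatio_P23_add_smul_P31_iff W Θ).1
      (.of_iso hI ((actionSquareRatio_P23_add_smul_P31_iff W Θ).2 rfl))).symm,
    fun h => h ▸ Iso.refl _⟩

end PairwiseNonisomorphic

/-- classification of nilpotent Jordan superalgebras of type (2,3):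
every one is isomorphic to a listed superalgebra, and the listed superalgebras are
pairwise non-isomorphic except within the three parametrized families, where
isomorphism holds exactly for equal parameters. -/
theorem stmt3 :
    (∀ μ : Tensor 2 3, IsJordanSuper μ → IsNilpotentT μ →
       (∃ i : Fin 41, Iso μ (A23 i)) ∨ (∃ l : ℂ, l ≠ 0 ∧ Iso μ (A31 l)) ∨
       (∃ g : ℂ, g ≠ 0 ∧ Iso μ (A43 g)) ∨ (∃ p : ℂ, Iso μ (A44 p))) ∧
    (∀ i j : Fin 41, Iso (A23 i) (A23 j) → i = j) ∧
    (∀ (i : Fin 41) (l : ℂ), l ≠ 0 → ¬ Iso (A23 i) (A31 l)) ∧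
    (∀ (i : Fin 41) (g : ℂ), g ≠ 0 → ¬ Iso (A23 i) (A43 g)) ∧
    (∀ (i : Fin 41) (p : ℂ), ¬ Iso (A23 i) (A44 p)) ∧
    (∀ l g : ℂ, l ≠ 0 → g ≠ 0 → ¬ Iso (A31 l) (A43 g)) ∧
    (∀ (l p : ℂ), l ≠ 0 → ¬ Iso (A31 l) (A44 p)) ∧
    (∀ (g p : ℂ), g ≠ 0 → ¬ Iso (A43 g) (A44 p)) ∧
    (∀ l₁ l₂ : ℂ, l₁ ≠ 0 → l₂ ≠ 0 → (Iso (A31 l₁) (A31 l₂) ↔ l₁ = l₂)) ∧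
    (∀ g₁ g₂ : ℂ, g₁ ≠ 0 → g₂ ≠ 0 → (Iso (A43 g₁) (A43 g₂) ↔ g₁ = g₂)) ∧
    (∀ p₁ p₂ : ℂ, Iso (A44 p₁) (A44 p₂) ↔ p₁ = p₂) := by
  refine ⟨fun _ hJ hN => IsNilpotentJordan.inTable ⟨hJ, hN.actsNilpotently⟩,
    fun _ _ => A23_injective_of_iso,
    fun _ _ => not_iso_A23_A31, fun _ _ => not_iso_A23_A43, fun _ _ => not_iso_A23_A44,
    fun _ _ => not_iso_A31_A43, fun _ _ => not_iso_A31_A44, fun _ _ => not_iso_A43_A44,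
    fun _ _ _ _ => iso_A31_iff, fun _ _ _ _ => iso_P23_add_smul_P31_iff 0 0,
    fun _ _ => iso_P23_add_smul_P31_iff 0 W23⟩

end
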